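/- arXiv:1806.00517 — 2 statements merged into one kernel-verified Lean document; each statement's English description precedes it below -/
import Mathlib

section
/- Let p = 3 and let N be a prime with N ≡ 1 (mod 3). Then r_K = 1. -/
open scoped TensorProduct

/-- The `p`-rank of a commutative group `G`, i.e. `dim_{𝔽_p}(G ⊗ 𝔽_p)`. -/
noncomputable def pRank (p : ℕ) (G : Type*) [CommGroup G] : ℕ :=
  Module.finrank (ZMod p) (ZMod p ⊗[ℤ] Additive G)

/-- The `p`-rank of the class group of the number field `K`. -/
noncomputable def classRank (p : ℕ) (K : Type*) [Field K] : ℕ :=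
  pRank p (ClassGroup (NumberField.RingOfIntegers K))

/-- `p` is a regular prime: `p` does not divide the class number of `ℚ(ζ_p)`. -/
def RegularPrime (p : ℕ+) : Prop :=
  ¬ (p : ℕ) ∣ Nat.card (ClassGroup (NumberField.RingOfIntegers (CyclotomicField p ℚ)))

/-- `M_i = ∏_{k=1}^{N-1} ∏_{a=1}^{k-1} k^{a^i}` as an element of `𝔽_N = ZMod N`. -/
def Mnum (N i : ℕ) : ZMod N :=
  ∏ k ∈ Finset.Icc 1 (N - 1), ∏ a ∈ Finset.Icc 1 (k - 1), (k : ZMod N) ^ (a ^ i)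

/-- `S_i = ∏_{k=1}^{p-1} ((Mk)!)^{k^i}` with `M = (N-1)/p`, as an element of `ZMod N`. -/
def Snum (p N i : ℕ) : ZMod N :=
  ∏ k ∈ Finset.Icc 1 (p - 1), (Nat.factorial ((N - 1) / p * k) : ZMod N) ^ (k ^ i)

/-- `A_m = ∏_{k=1}^{N-1} k^{k^m}` as an element of `ZMod N`. -/
def Anum (N m : ℕ) : ZMod N :=
  ∏ k ∈ Finset.Icc 1 (N - 1), (k : ZMod N) ^ (k ^ m)

/-- Merel's number `C = ∏_{k=1}^{(N-1)/2} k^k` as an element of `ZMod N`. -/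
def MerelC (N : ℕ) : ZMod N :=
  ∏ k ∈ Finset.Icc 1 ((N - 1) / 2), (k : ZMod N) ^ k

/-- `x` is a `p`-th power in `𝔽_N`. -/
def IsPthPow (p : ℕ) {N : ℕ} (x : ZMod N) : Prop :=
  ∃ y : ZMod N, y ^ p = x

/-!
Let `k = ℚ(ζ₃)` and `L = K(ζ₃)`, so that `L / k` is cyclic of degree `3`, with generator `σ`.

Upper bound. Extension of ideals is injective on `3`-torsion because `[L : K] = 2`. As `𝓞 k` is a
principal ideal domain, `1 + σ + σ²` kills the classes of `L`; combined with the action of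
`Gal(L/K)`, this shows that `Cl(K)[3]` has at most as many elements as there are ambiguous classes
(those fixed by `σ`). Up to the index of the unit norms among the units that are norms, the
ambiguous classes are those of ambiguous ideals, which are generated over `k` by the ramified
primes: two primes `P₁` and `P₂` above `N`, with `P₁ * P₂` principal, and possibly one above `3`.
If the prime above `3` ramifies, then `ζ₃` is not a norm; if `ζ₃` is not the norm of a unit, then
Hilbert 90 applied to a unit of norm `1` gives one more relation among the classes of these primes.
In every case there are at most `3` ambiguous classes.

Lower bound, for an odd prime `p` and `K = ℚ(N^{1/p})`. Modulo `N` the element `N^{1/p}` is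
nilpotent, so norms of elements of `𝓞 K` are `p`-th powers modulo `N`. Choose a prime
`q ≡ 2 (mod p)` that is not a `p`-th power modulo `N`. It is not inert: otherwise `N^{1/p}`, the
only `p`-th root of `N` in the residue field, would be congruent to an integer modulo `q`, which
is impossible as its trace is `0`. So some ideal `P` has norm `q ^ f` with `0 < f < p`, and `P ^ n`
is not principal unless `p ∣ n`.
-/

section FiniteGroups

theorem card_zmod_tensor_additive (p : ℕ) (G : Type*) [CommGroup G] :
    Nat.card (ZMod p ⊗[ℤ] Additive G) = (powMonoidHom p : G →* G).range.index := by
  let I : Ideal ℤ := Ideal.span {(p : ℤ)}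
  let quotEquiv : ZMod p ≃ₗ[ℤ] ℤ ⧸ I :=
    (Int.quotientSpanNatEquivZMod p).symm.toAddEquiv.toIntLinearEquiv
  have smul_top : (I • (⊤ : Submodule ℤ (Additive G))).toAddSubgroup =
      (powMonoidHom p : G →* G).range.toAddSubgroup := by
    ext x
    rw [Submodule.mem_toAddSubgroup, Submodule.ideal_span_singleton_smul,
      Submodule.mem_smul_pointwise_iff_exists]
    exact ⟨fun ⟨y, _, hy⟩ => ⟨y.toMul, (zpow_natCast y.toMul p).symm.trans hy⟩,
      fun ⟨y, hy⟩ => ⟨Additive.ofMul y, trivial, (zpow_natCast y p).trans hy⟩⟩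
  rw [← Subgroup.index_toAddSubgroup, ← smul_top]
  exact Nat.card_congr ((TensorProduct.congr quotEquiv (LinearEquiv.refl ℤ (Additive G))).trans
    (TensorProduct.quotTensorEquivQuotSMul (Additive G) I)).toEquiv

theorem index_range_eq_card_ker {G : Type*} [Group G] [Finite G] (f : G →* G) :
    f.range.index = Nat.card f.ker := by
  refine Nat.eq_of_mul_eq_mul_right (Nat.card_pos (α := f.range)) ?_
  rw [f.range.index_mul_card, ← Subgroup.index_ker, Subgroup.card_mul_index]

theorem pow_pRank (p : ℕ) [Fact p.Prime] (G : Type*) [CommGroup G] [Finite G] :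
    p ^ pRank p G = Nat.card (powMonoidHom p : G →* G).ker := by
  have card_tensor := (card_zmod_tensor_additive p G).trans (index_range_eq_card_ker _)
  have : Finite (ZMod p ⊗[ℤ] Additive G) :=
    Nat.finite_of_card_ne_zero (card_tensor ▸ Nat.card_pos.ne')
  rw [← card_tensor, Module.natCard_eq_pow_finrank (K := ZMod p), Nat.card_zmod, pRank]

theorem pRank_pos {p : ℕ} [hp : Fact p.Prime] {G : Type*} [CommGroup G] [Finite G]
    (h : p ∣ Nat.card G) : 0 < pRank p G := by
  obtain ⟨x, hx⟩ := exists_prime_orderOf_dvd_card' p h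
  have x_mem : x ∈ (powMonoidHom p : G →* G).ker := by
    rw [MonoidHom.mem_ker, powMonoidHom_apply, ← hx, pow_orderOf_eq_one]
  have p_dvd := hx ▸ Subgroup.orderOf_dvd_natCard _ x_mem
  rw [← pow_pRank] at p_dvd
  rw [Nat.pos_iff_ne_zero]
  intro h0
  rw [h0, pow_zero] at p_dvd
  exact hp.out.one_lt.ne' (Nat.dvd_one.1 p_dvd)

theorem card_mul_card_le_of_disjoint {G : Type*} [CommGroup G] {H₁ H₂ K : Subgroup G} [Finite K]
    (disjoint : Disjoint H₁ H₂) (h₁ : H₁ ≤ K) (h₂ : H₂ ≤ K) :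
    Nat.card H₁ * Nat.card H₂ ≤ Nat.card K := by
  rw [← Nat.card_prod]
  exact Nat.card_le_card_of_injective
    (fun x : H₁ × H₂ => (⟨x.1 * x.2, K.mul_mem (h₁ x.1.2) (h₂ x.2.2)⟩ : K)) fun x y h =>
      Subgroup.mul_injective_of_disjoint disjoint (congrArg Subtype.val h)

/-- The subgroup of elements fixed by an endomorphism `s`. -/
abbrev fixedSubgroup {D : Type*} [CommGroup D] (s : D →* D) : Subgroup D :=
  s.eqLocus (MonoidHom.id D)

/- If `f c = j c / s (j c)`, then the relation `j c * s (j c) * s (s (j c)) = 1` and `c ^ 3 = 1`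
make `f c` fixed by `s` and inverted by `t`, whereas `j` maps the kernel of `f` to elements fixed
by both `s` and `t`; hence the image of `f` and the image of its kernel are disjoint. -/
theorem card_ker_cube_le_card_fixedSubgroup {C D : Type*} [CommGroup C] [CommGroup D] [Finite D]
    (j : C →* D) (s t : D →* D) (hj : ∀ c, c ^ 3 = 1 → j c = 1 → c = 1)
    (htj : ∀ c, t (j c) = j c) (hts : ∀ c, t (s (j c)) = s (s (j c)))
    (hN : ∀ c, j c * s (j c) * s (s (j c)) = 1) :
    Nat.card (powMonoidHom 3 : C →* C).ker ≤ Nat.card (fixedSubgroup s) := by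
  let T := (powMonoidHom 3 : C →* C).ker
  let i : T →* D := j.comp T.subtype
  let f : T →* D := i / s.comp i
  have cube_i (c : T) : i c ^ 3 = 1 := by
    rw [← map_pow, show c ^ 3 = 1 from Subtype.ext c.2, map_one]
  have i_inv (c : T) : (i c)⁻¹ = s (i c) * s (s (i c)) :=
    inv_eq_of_mul_eq_one_right ((mul_assoc _ _ _).symm.trans (hN c))
  have i_injective : Function.Injective i :=
    (injective_iff_map_eq_one i).2 fun c hc => Subtype.ext (hj c c.2 hc)
  have f_fixed (c : T) : s (f c) = f c := by
    have : s (i c) ^ 3 = 1 := by rw [← map_pow, cube_i, map_one]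
    rw [show f c = i c / s (i c) from rfl, map_div, div_eq_div_iff_mul_eq_mul]
    calc s (i c) * s (i c) = (s (i c))⁻¹ := by
          rw [eq_inv_iff_mul_eq_one, ← this, pow_three']
      _ = i c * s (s (i c)) := by
          rw [inv_eq_iff_mul_eq_one, ← mul_inv_cancel (i c), i_inv c, mul_left_comm]
  have f_inverted (c : T) : t (f c) = (f c)⁻¹ := by
    rw [show f c = i c / s (i c) from rfl, map_div, inv_div, div_eq_div_iff_mul_eq_mul]
    calc t (i c) * i c = i c * i c := by rw [show t (i c) = i c from htj c]
      _ = (i c)⁻¹ := by rw [eq_inv_iff_mul_eq_one, ← cube_i c, pow_three']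
      _ = s (i c) * t (s (i c)) := by rw [i_inv, show t (s (i c)) = s (s (i c)) from hts c]
  have ker_fixed : f.ker.map i ≤ fixedSubgroup s := by
    rintro _ ⟨c, hc, rfl⟩
    exact (div_eq_one.1 hc).symm
  have range_fixed : f.range ≤ fixedSubgroup s := by
    rintro _ ⟨c, rfl⟩
    exact f_fixed c
  have disjoint : Disjoint (f.ker.map i) f.range := by
    rw [Subgroup.disjoint_def]
    rintro _ ⟨c, _, rfl⟩ ⟨d, hd⟩
    have : (i c)⁻¹ = i c := by rw [← hd, ← f_inverted, hd]; exact htj c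
    rw [← cube_i c, pow_three, ← mul_assoc, mul_eq_one_iff_eq_inv.2 this.symm, one_mul]
  calc Nat.card T = Nat.card (f.ker.map i) * Nat.card f.range := by
        rw [Subgroup.card_map_of_injective i_injective, ← Subgroup.index_ker,
          Subgroup.card_mul_index]
    _ ≤ Nat.card (fixedSubgroup s) := card_mul_card_le_of_disjoint disjoint ker_fixed range_fixed

theorem card_closure_pair_dvd {G : Type*} [Group G] {p : ℕ} (hp : p.Prime) {g h : G}
    (hg : g ^ p = 1) (hh : h ^ p = 1) {m n : ℕ} (rel : g ^ m * h ^ n = 1)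
    (hmn : ¬ (p ∣ m ∧ p ∣ n)) : Nat.card (Subgroup.closure {g, h}) ∣ p := by
  wlog hm : ¬ p ∣ m generalizing g h m n
  · rw [Set.pair_comm]
    exact this hh hg (mul_eq_one_comm.1 rel) (by rwa [and_comm]) (by tauto)
  have g_mem : g ∈ Subgroup.zpowers h := by
    have coprime : (orderOf g).Coprime m :=
      ((hp.coprime_iff_not_dvd.2 hm).of_dvd_left (orderOf_dvd_of_pow_eq_one hg))
    obtain ⟨l, hl⟩ := exists_pow_eq_self_of_coprime coprime.symm
    rw [← hl, eq_inv_of_mul_eq_one_left rel]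
    exact pow_mem (inv_mem (pow_mem (Subgroup.mem_zpowers h) n)) l
  have closure_eq : Subgroup.closure {g, h} = Subgroup.zpowers h := by
    refine le_antisymm ((Subgroup.closure_le _).2 (Set.pair_subset g_mem
      (Subgroup.mem_zpowers h))) (Subgroup.zpowers_le.2 (Subgroup.subset_closure (by simp)))
  rw [closure_eq, Nat.card_zpowers]
  exact orderOf_dvd_of_pow_eq_one hh

theorem prod_eq_prod_range_pow {G M : Type*} [Group G] [Fintype G] [CommMonoid M] {σ : G}
    (hσ : ∀ τ, τ ∈ Subgroup.zpowers σ) (f : G → M) :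
    ∏ g, f g = ∏ i ∈ Finset.range (orderOf σ), f (σ ^ i) := by
  classical
  rw [← IsCyclic.image_range_orderOf hσ, Finset.prod_image]
  exact fun i hi j hj => pow_injOn_Iio_orderOf (Finset.mem_range.1 hi) (Finset.mem_range.1 hj)

end FiniteGroups

open scoped Pointwise nonZeroDivisors

section IdealClasses

theorem span_singleton_ne_bot {R : Type*} [CommRing R] {x : R} (hx : x ≠ 0) :
    Ideal.span {x} ≠ ⊥ :=
  Ideal.span_singleton_eq_bot.not.2 hx

theorem map_ne_bot {R S : Type*} [CommRing R] [CommRing S] {f : R →+* S} (hf : Function.Injective f)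
    {I : Ideal R} (hI : I ≠ ⊥) :
    I.map f ≠ ⊥ :=
  (Ideal.map_eq_bot_iff_of_injective hf).not.2 hI

variable {R S : Type*} [CommRing R] [IsDedekindDomain R] [CommRing S] [IsDedekindDomain S]

/-- The ideal class of a nonzero ideal. -/
noncomputable def idealClass (I : Ideal R) (hI : I ≠ ⊥) : ClassGroup R :=
  ClassGroup.mk0 ⟨I, mem_nonZeroDivisors_of_ne_zero hI⟩

theorem exists_idealClass_eq (c : ClassGroup R) :
    ∃ (I : Ideal R) (hI : I ≠ ⊥), idealClass I hI = c := by
  obtain ⟨⟨I, hI⟩, rfl⟩ := ClassGroup.mk0_surjective c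
  exact ⟨I, nonZeroDivisors.ne_zero hI, rfl⟩

theorem idealClass_congr {I J : Ideal R} (h : I = J) (hI : I ≠ ⊥) (hJ : J ≠ ⊥) :
    idealClass I hI = idealClass J hJ := by
  subst h
  rfl

theorem idealClass_mul {I J : Ideal R} (hI : I ≠ ⊥) (hJ : J ≠ ⊥) :
    idealClass (I * J) (mul_ne_zero hI hJ) = idealClass I hI * idealClass J hJ := by
  rw [idealClass, idealClass, idealClass, ← map_mul]
  rfl

theorem idealClass_pow {I : Ideal R} (hI : I ≠ ⊥) (n : ℕ) :
    idealClass (I ^ n) (pow_ne_zero n hI) = idealClass I hI ^ n := by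
  rw [idealClass, idealClass, ← map_pow]
  rfl

theorem prod_idealClass {ι : Type*} (s : Finset ι) {I : ι → Ideal R} (hI : ∀ i, I i ≠ ⊥) :
    ∏ i ∈ s, idealClass (I i) (hI i) =
      idealClass (∏ i ∈ s, I i) (Finset.prod_ne_zero_iff.2 fun i _ => hI i) := by
  simp only [idealClass]
  rw [← map_prod]
  exact congrArg _ (Subtype.ext (SubmonoidClass.coe_finsetProd _ s))

theorem idealClass_eq_one_iff {I : Ideal R} (hI : I ≠ ⊥) :
    idealClass I hI = 1 ↔ ∃ x, I = Ideal.span {x} :=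
  (ClassGroup.mk0_eq_one_iff _).trans (Submodule.isPrincipal_iff I)

theorem idealClass_span_singleton {x : R} (hx : x ≠ 0) :
    idealClass (Ideal.span {x}) (span_singleton_ne_bot hx) = 1 :=
  (idealClass_eq_one_iff _).2 ⟨x, rfl⟩

theorem idealClass_top : idealClass (⊤ : Ideal R) top_ne_bot = 1 :=
  (idealClass_eq_one_iff _).2 ⟨1, Ideal.span_singleton_one.symm⟩

theorem idealClass_eq_iff {I J : Ideal R} (hI : I ≠ ⊥) (hJ : J ≠ ⊥) :
    idealClass I hI = idealClass J hJ ↔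
      ∃ x y, x ≠ 0 ∧ y ≠ 0 ∧ Ideal.span {x} * I = Ideal.span {y} * J := by
  rw [idealClass, idealClass, ClassGroup.mk0_eq_mk0_iff]
  simp only [exists_prop, exists_and_left]

/-- The homomorphism of class groups given by extension of ideals along an injective ring
homomorphism. -/
noncomputable def classHom (f : R →+* S) (hf : Function.Injective f) :
    ClassGroup R →* ClassGroup S :=
  letI : Algebra R S := f.toAlgebra
  haveI : FaithfulSMul R S := (faithfulSMul_iff_algebraMap_injective R S).2 hf
  ClassGroup.extendedHom R S

theorem classHom_idealClass {f : R →+* S} (hf : Function.Injective f) {I : Ideal R} (hI : I ≠ ⊥) :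
    classHom f hf (idealClass I hI) = idealClass (I.map f) (map_ne_bot hf hI) := by
  let : Algebra R S := f.toAlgebra
  have : FaithfulSMul R S := (faithfulSMul_iff_algebraMap_injective R S).2 hf
  exact ClassGroup.extendedHom_mk0 R S ⟨I, mem_nonZeroDivisors_of_ne_zero hI⟩

end IdealClasses

section GaloisAction

variable {R G : Type*} [CommRing R] [Group G] [MulSemiringAction G R]

theorem smul_ideal_ne_bot (g : G) {I : Ideal R} (hI : I ≠ ⊥) : g • I ≠ ⊥ := by
  rwa [Ne, smul_eq_iff_eq_inv_smul, Ideal.smul_bot]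

theorem smul_span_singleton (g : G) (x : R) : g • Ideal.span {x} = Ideal.span {g • x} := by
  rw [Ideal.smul_closure, Set.smul_set_singleton]

theorem smul_ideal_top (g : G) : g • (⊤ : Ideal R) = ⊤ := by
  rw [← Ideal.span_singleton_one, smul_span_singleton, smul_one]

theorem smul_ideal_map {S : Type*} [CommRing S] (g : G) (f : S →+* R) (I : Ideal S) :
    g • I.map f = I.map ((MulSemiringAction.toRingHom G R g).comp f) :=
  Ideal.map_map f _

/-- The action of a ring automorphism on ideal classes. -/
noncomputable def galClass [IsDedekindDomain R] (g : G) : ClassGroup R →* ClassGroup R :=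
  classHom (MulSemiringAction.toRingHom G R g) (MulAction.injective g)

theorem galClass_idealClass [IsDedekindDomain R] (g : G) {I : Ideal R} (hI : I ≠ ⊥) :
    galClass g (idealClass I hI) = idealClass (g • I) (smul_ideal_ne_bot g hI) :=
  classHom_idealClass (MulAction.injective g) hI

theorem galClass_one [IsDedekindDomain R] (c : ClassGroup R) : galClass (1 : G) c = c := by
  obtain ⟨I, hI, rfl⟩ := exists_idealClass_eq c
  rw [galClass_idealClass]
  exact idealClass_congr (one_smul G I) _ _

theorem galClass_mul [IsDedekindDomain R] (g h : G) (c : ClassGroup R) :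
    galClass (g * h) c = galClass g (galClass h c) := by
  obtain ⟨I, hI, rfl⟩ := exists_idealClass_eq c
  simp only [galClass_idealClass]
  exact idealClass_congr (mul_smul g h I) _ _

end GaloisAction
/- The map `c ↦ ∑ i < n, (∏ j < i, σ ^ j x) * σ ^ i c` takes values in the solutions of
`x * σ z = z`, and does not vanish identically by the independence of characters. -/
theorem exists_mul_apply_eq_self {k L : Type*} [Field k] [Field L] [Algebra k L] {σ : Gal(L/k)}
    (hσ : IsOfFinOrder σ) {x : L} (hx : ∏ i ∈ Finset.range (orderOf σ), (σ ^ i) x = 1) :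
    ∃ z ≠ 0, x * σ z = z := by
  let b (i : ℕ) : L := ∏ j ∈ Finset.range i, (σ ^ j) x
  have b_succ (i : ℕ) : b (i + 1) = x * σ (b i) := by
    simp only [b, Finset.prod_range_succ', map_prod, pow_succ', AlgEquiv.mul_apply, pow_zero,
      AlgEquiv.one_apply, mul_comm x]
  let z (c : L) : L := ∑ i ∈ Finset.range (orderOf σ), b i * (σ ^ i) c
  have z_fixed (c : L) : x * σ (z c) = z c := by
    have shift : x * σ (z c) = ∑ i ∈ Finset.range (orderOf σ), b (i + 1) * (σ ^ (i + 1)) c := by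
      simp only [z, b_succ, map_sum, map_mul, Finset.mul_sum, mul_assoc, pow_succ',
        AlgEquiv.mul_apply]
    have telescope := (Finset.sum_range_succ' (fun i => b i * (σ ^ i) c) (orderOf σ)).symm.trans
      (Finset.sum_range_succ (fun i => b i * (σ ^ i) c) (orderOf σ))
    have ends : b (orderOf σ) * (σ ^ orderOf σ) c = b 0 * (σ ^ 0) c := by
      rw [pow_orderOf_eq_one, pow_zero, show b (orderOf σ) = 1 from hx,
        show b 0 = 1 from Finset.prod_range_zero _]
    rw [ends] at telescope
    rw [shift, add_right_cancel telescope]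
  have independent : LinearIndependent L fun i : Fin (orderOf σ) => ⇑(σ ^ (i : ℕ)) :=
    (linearIndependent_monoidHom L L).comp
      (fun i : Fin (orderOf σ) => ((σ ^ (i : ℕ) : Gal(L/k)) : L →* L))
      fun i j hij => Fin.ext <| pow_injOn_Iio_orderOf i.2 j.2 <|
        AlgEquiv.ext fun c => DFunLike.congr_fun hij c
  by_contra! no_solution
  have b_eq_zero := Fintype.linearIndependent_iff.1 independent (fun i => b i) <| by
    ext c
    have : z c = 0 := not_not.1 fun h => no_solution _ h (z_fixed c)
    rw [Finset.sum_apply, Pi.zero_apply, ← this]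
    exact Fin.sum_univ_eq_sum_range (fun i => b i * (σ ^ i) c) _
  exact one_ne_zero (b_eq_zero ⟨0, hσ.orderOf_pos⟩)

theorem norm_eq_prod_range_pow {k L : Type*} [Field k] [Field L] [Algebra k L]
    [FiniteDimensional k L] [IsGalois k L] {σ : Gal(L/k)} (hσ : ∀ τ, τ ∈ Subgroup.zpowers σ)
    (x : L) : algebraMap k L (Algebra.norm k x) = ∏ i ∈ Finset.range (orderOf σ), (σ ^ i) x := by
  rw [Algebra.norm_eq_prod_automorphisms, prod_eq_prod_range_pow hσ fun g : Gal(L/k) => g x]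

section AmbiguousClasses

open NumberField

variable {k L : Type*} [Field k] [NumberField k] [Field L] [NumberField L] [Algebra k L]

/-- The ideal classes fixed by `σ`. -/
noncomputable abbrev ambiguousClasses (σ : Gal(L/k)) : Subgroup (ClassGroup (𝓞 L)) :=
  fixedSubgroup (galClass σ)

/-- The subgroup generated by the classes of the ideals fixed by `σ`. -/
noncomputable def stronglyAmbiguousClasses (σ : Gal(L/k)) : Subgroup (ClassGroup (𝓞 L)) :=
  Subgroup.closure {c | ∃ (I : Ideal (𝓞 L)) (hI : I ≠ ⊥), σ • I = I ∧ idealClass I hI = c}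

variable (k L) in
/-- The units of `k` which are norms of units of `L`. -/
noncomputable def unitNorms : Subgroup (𝓞 k)ˣ :=
  (Units.map (Algebra.intNorm (𝓞 k) (𝓞 L))).range

variable (k L) in
/-- The units of `k` which are norms of elements of `L`. -/
noncomputable def unitsInNorms : Subgroup (𝓞 k)ˣ :=
  (Units.map (Algebra.norm k (S := L))).range.comap (Units.map (algebraMap (𝓞 k) k).toMonoidHom)

theorem algebraMap_intNorm (x : 𝓞 L) :
    algebraMap (𝓞 k) k (Algebra.intNorm (𝓞 k) (𝓞 L) x) = Algebra.norm k (x : L) :=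
  Algebra.algebraMap_intNorm (A := 𝓞 k) (K := k) (L := L) (B := 𝓞 L) x

instance smulCommClass_ringOfIntegers : SMulCommClass Gal(L/k) (𝓞 k) (𝓞 L) :=
  ⟨fun g a x => by
    have fixed : g • algebraMap (𝓞 k) (𝓞 L) a = algebraMap (𝓞 k) (𝓞 L) a :=
      RingOfIntegers.ext (g.commutes (a : k))
    rw [Algebra.smul_def, Algebra.smul_def, smul_mul', fixed]⟩

theorem intNorm_smul (g : Gal(L/k)) (x : 𝓞 L) :
    Algebra.intNorm (𝓞 k) (𝓞 L) (g • x) = Algebra.intNorm (𝓞 k) (𝓞 L) x :=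
  Algebra.intNorm_map_algEquiv (𝓞 L) x (MulSemiringAction.toAlgEquiv (𝓞 k) (𝓞 L) g)

theorem intNorm_ne_zero {x : 𝓞 L} (hx : x ≠ 0) : Algebra.intNorm (𝓞 k) (𝓞 L) x ≠ 0 := by
  simpa using hx

/-- The pairs of a class `[I]` and a unit `u` of `k` such that `I / σ I` has a generator of
norm `u`. This is the graph of a homomorphism from the ambiguous classes to the units of `k` modulo
norms of units, which is well defined on classes modulo the strongly ambiguous ones. -/
noncomputable def ambiguousNormRel (σ : Gal(L/k)) : Subgroup (ClassGroup (𝓞 L) × (𝓞 k)ˣ) where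
  carrier := {z | ∃ (I : Ideal (𝓞 L)) (hI : I ≠ ⊥) (x y : 𝓞 L), x ≠ 0 ∧ y ≠ 0 ∧
    Ideal.span {x} * I = Ideal.span {y} * σ • I ∧
    Algebra.intNorm (𝓞 k) (𝓞 L) x = z.2 * Algebra.intNorm (𝓞 k) (𝓞 L) y ∧
    idealClass I hI = z.1}
  one_mem' := ⟨⊤, top_ne_bot, 1, 1, one_ne_zero, one_ne_zero, by rw [smul_ideal_top],
    by simp only [map_one, Prod.snd_one, Units.val_one, mul_one],
    idealClass_top⟩
  mul_mem' := by
    rintro ⟨_, u⟩ ⟨_, v⟩ ⟨I, hI, x, y, hx, hy, hIσ, hxy, rfl⟩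
      ⟨J, hJ, x', y', hx', hy', hJσ, hxy', rfl⟩
    refine ⟨I * J, mul_ne_zero hI hJ, x * x', y * y', mul_ne_zero hx hx', mul_ne_zero hy hy', ?_,
      ?_, idealClass_mul hI hJ⟩
    · rw [← Ideal.span_singleton_mul_span_singleton, ← Ideal.span_singleton_mul_span_singleton,
        mul_mul_mul_comm, hIσ, hJσ, smul_mul', mul_mul_mul_comm]
    · rw [map_mul, map_mul, hxy, hxy', Prod.snd_mul, Units.val_mul, mul_mul_mul_comm]
  inv_mem' := by
    rintro ⟨_, u⟩ ⟨I, hI, x, y, hx, hy, hIσ, hxy, rfl⟩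
    obtain ⟨d, hd, d_ne⟩ := Submodule.exists_mem_ne_zero_of_ne_bot hI
    obtain ⟨J, hIJ⟩ := Ideal.dvd_span_singleton.2 hd
    have span_d : Ideal.span {d} ≠ ⊥ := span_singleton_ne_bot d_ne
    have hJ : J ≠ ⊥ := right_ne_zero_of_mul (hIJ ▸ span_d)
    refine ⟨J, hJ, y * σ • d, x * d, mul_ne_zero hy (by rwa [Ne, smul_eq_zero_iff_eq]),
      mul_ne_zero hx d_ne, ?_, ?_, ?_⟩
    · rw [← Ideal.span_singleton_mul_span_singleton, ← Ideal.span_singleton_mul_span_singleton,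
        ← smul_span_singleton, hIJ, smul_mul', ← mul_assoc, ← hIσ]
      ring
    · rw [map_mul, map_mul, intNorm_smul, hxy, ← mul_assoc, ← mul_assoc, Prod.snd_inv,
        Units.inv_mul, one_mul]
    · rw [Prod.fst_inv, eq_inv_iff_mul_eq_one, mul_comm, ← idealClass_mul hI hJ,
        idealClass_eq_one_iff]
      exact ⟨d, hIJ.symm⟩

theorem exists_mem_ambiguousNormRel {σ : Gal(L/k)} {c : ClassGroup (𝓞 L)}
    (hc : c ∈ ambiguousClasses σ) : ∃ u, (c, u) ∈ ambiguousNormRel σ := by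
  obtain ⟨I, hI, rfl⟩ := exists_idealClass_eq c
  have hσ : idealClass (σ • I) _ = idealClass I hI := (galClass_idealClass σ hI).symm.trans hc
  obtain ⟨x, y, hx, hy, hxy⟩ := (idealClass_eq_iff _ _).1 hσ.symm
  have span_norm : Ideal.span {Algebra.intNorm (𝓞 k) (𝓞 L) y} =
      Ideal.span {Algebra.intNorm (𝓞 k) (𝓞 L) x} := by
    have := congrArg (Ideal.relNorm (𝓞 k)) hxy
    rw [map_mul, map_mul, Ideal.relNorm_smul, Ideal.relNorm_singleton,
      Ideal.relNorm_singleton] at this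
    exact (mul_right_cancel₀ (Ideal.relNorm_eq_bot_iff.not.2 hI) this).symm
  obtain ⟨u, hu⟩ := Ideal.span_singleton_eq_span_singleton.1 span_norm
  exact ⟨u, I, hI, x, y, hx, hy, hxy, by rw [← hu, mul_comm], rfl⟩

theorem fst_mem_ambiguousClasses {σ : Gal(L/k)} {c : ClassGroup (𝓞 L)} {u : (𝓞 k)ˣ}
    (h : (c, u) ∈ ambiguousNormRel σ) : c ∈ ambiguousClasses σ := by
  obtain ⟨I, hI, x, y, hx, hy, hIσ, -, rfl⟩ := h
  exact (galClass_idealClass σ hI).trans ((idealClass_eq_iff _ hI).2 ⟨y, x, hy, hx, hIσ.symm⟩)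

theorem one_norm_mem_ambiguousNormRel (σ : Gal(L/k)) {u : (𝓞 k)ˣ} (hu : u ∈ unitNorms k L) :
    (1, u) ∈ ambiguousNormRel σ := by
  obtain ⟨e, rfl⟩ := hu
  refine ⟨⊤, top_ne_bot, e, 1, e.ne_zero, one_ne_zero, ?_, ?_, idealClass_top⟩
  · rw [smul_ideal_top, Ideal.span_singleton_eq_top.2 e.isUnit, Ideal.span_singleton_one]
  · rw [map_one, mul_one, Units.coe_map]

theorem snd_mem_unitsInNorms {σ : Gal(L/k)} {c : ClassGroup (𝓞 L)} {u : (𝓞 k)ˣ}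
    (h : (c, u) ∈ ambiguousNormRel σ) : u ∈ unitsInNorms k L := by
  obtain ⟨I, hI, x, y, hx, hy, -, hxy, -⟩ := h
  have hx' : (x : L) ≠ 0 := RingOfIntegers.coe_ne_zero_iff.2 hx
  have hy' : (y : L) ≠ 0 := RingOfIntegers.coe_ne_zero_iff.2 hy
  refine ⟨Units.mk0 (x : L) hx' / Units.mk0 (y : L) hy', Units.ext ?_⟩
  have := congrArg (algebraMap (𝓞 k) k) hxy
  rw [map_mul, algebraMap_intNorm, algebraMap_intNorm] at this
  rw [map_div, Units.val_div_eq_div_val, div_eq_iff (by simpa using hy')]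
  exact this

theorem exists_mul_smul_eq_mul [IsGalois k L] {σ : Gal(L/k)} (hσ : ∀ τ, τ ∈ Subgroup.zpowers σ)
    {x y : 𝓞 L} (hy : y ≠ 0)
    (hxy : Algebra.intNorm (𝓞 k) (𝓞 L) x = Algebra.intNorm (𝓞 k) (𝓞 L) y) :
    ∃ a ≠ 0, x * σ • a = y * a := by
  have hy' : (y : L) ≠ 0 := RingOfIntegers.coe_ne_zero_iff.2 hy
  have norm_div : Algebra.norm k ((x : L) / y) = 1 := by
    rw [div_eq_mul_inv, map_mul, Algebra.norm_inv, ← algebraMap_intNorm, ← algebraMap_intNorm, hxy]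
    exact mul_inv_cancel₀ (RingOfIntegers.coe_ne_zero_iff.2 (intNorm_ne_zero hy))
  obtain ⟨z, z_ne, hz⟩ := exists_mul_apply_eq_self (isOfFinOrder_of_finite σ)
    ((norm_eq_prod_range_pow hσ _).symm.trans ((congrArg _ norm_div).trans (map_one _)))
  have z_algebraic : IsAlgebraic ℤ z :=
    (IsFractionRing.isAlgebraic_iff ℤ ℚ L).2 (Algebra.IsAlgebraic.isAlgebraic z)
  obtain ⟨d, hd, hdz⟩ := z_algebraic.exists_integral_multiple
  refine ⟨⟨d • z, hdz⟩, RingOfIntegers.coe_ne_zero_iff.1 (smul_ne_zero hd z_ne),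
    RingOfIntegers.ext ?_⟩
  change (x : L) * σ (d • z) = y * d • z
  rw [map_zsmul, mul_smul_comm, mul_smul_comm]
  congr 1
  rwa [div_mul_eq_mul_div, div_eq_iff hy', mul_comm z] at hz

theorem mem_stronglyAmbiguousClasses [IsGalois k L] {σ : Gal(L/k)}
    (hσ : ∀ τ, τ ∈ Subgroup.zpowers σ) {c : ClassGroup (𝓞 L)} (hc : (c, 1) ∈ ambiguousNormRel σ) :
    c ∈ stronglyAmbiguousClasses σ := by
  obtain ⟨I, hI, x, y, _, hy, hIσ, hxy, rfl⟩ := hc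
  obtain ⟨a, ha, hxa⟩ := exists_mul_smul_eq_mul hσ hy (by simpa using hxy)
  have span_a : Ideal.span {a} ≠ ⊥ := by simpa using ha
  refine Subgroup.subset_closure ⟨Ideal.span {a} * I, mul_ne_zero span_a hI, ?_, ?_⟩
  · have span_y : Ideal.span {y} ≠ ⊥ := by simpa using hy
    refine mul_left_cancel₀ span_y ?_
    rw [smul_mul', smul_span_singleton, mul_left_comm, ← hIσ, ← mul_assoc, ← mul_assoc,
      Ideal.span_singleton_mul_span_singleton, Ideal.span_singleton_mul_span_singleton,
      mul_comm (σ • a), hxa]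
  · rw [idealClass_mul span_a hI, (idealClass_eq_one_iff span_a).2 ⟨a, rfl⟩, one_mul]

theorem relIndex_map_fst_dvd {G H : Type*} [Group G] [Group H] {R : Subgroup (G × H)}
    {S : Subgroup G} {T : Subgroup H} (hS : ∀ g, (g, 1) ∈ R → g ∈ S) (hT : ∀ h ∈ T, (1, h) ∈ R) :
    S.relIndex (R.map (MonoidHom.fst G H)) ∣ T.relIndex (R.map (MonoidHom.snd G H)) := by
  rw [← Subgroup.relIndex_comap, ← Subgroup.relIndex_comap, ← Subgroup.inf_relIndex_right]
  rw [← Subgroup.inf_relIndex_right (T.comap _)]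
  refine Subgroup.relIndex_dvd_of_le_left R ?_
  rintro ⟨g, h⟩ ⟨hh, hR⟩
  exact ⟨hS g (by simpa using R.mul_mem hR (R.inv_mem (hT h hh))), hR⟩

theorem card_le_card_mul_relIndex {G : Type*} [Group G] (S K : Subgroup G) [Finite S] :
    Nat.card K ≤ Nat.card S * S.relIndex K := by
  rw [← (S.subgroupOf K).card_mul_index]
  exact Nat.mul_le_mul_right _ (Nat.card_le_card_of_injective
    (fun x : S.subgroupOf K => (⟨x.1, x.2⟩ : S)) fun x y h =>
      Subtype.ext (Subtype.ext (congrArg (fun s : S => (s : G)) h)))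

/- Half of Chevalley's ambiguous class number formula. -/
theorem card_ambiguousClasses_le [IsGalois k L] {σ : Gal(L/k)}
    (hσ : ∀ τ, τ ∈ Subgroup.zpowers σ) (hfin : (unitNorms k L).relIndex (unitsInNorms k L) ≠ 0) :
    Nat.card (ambiguousClasses σ) ≤
      Nat.card (stronglyAmbiguousClasses σ) * (unitNorms k L).relIndex (unitsInNorms k L) := by
  let R := ambiguousNormRel σ
  have fst_eq : R.map (MonoidHom.fst _ _) = ambiguousClasses σ := by
    refine le_antisymm ?_ fun c hc =>
      (exists_mem_ambiguousNormRel hc).elim fun u hu => ⟨(c, u), hu, rfl⟩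
    rintro _ ⟨⟨c, u⟩, h, rfl⟩
    exact fst_mem_ambiguousClasses h
  have snd_le : R.map (MonoidHom.snd _ _) ≤ unitsInNorms k L := by
    rintro _ ⟨⟨c, u⟩, h, rfl⟩
    exact snd_mem_unitsInNorms h
  have snd_relIndex := Subgroup.relIndex_le_of_le_right snd_le hfin
  have fst_relIndex := relIndex_map_fst_dvd (fun _ => mem_stronglyAmbiguousClasses hσ)
    (fun _ => one_norm_mem_ambiguousNormRel σ)
  rw [fst_eq] at fst_relIndex
  refine (card_le_card_mul_relIndex (stronglyAmbiguousClasses σ) (ambiguousClasses σ)).trans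
    (Nat.mul_le_mul_left _ ((Nat.le_of_dvd ?_ fst_relIndex).trans snd_relIndex))
  exact Nat.pos_of_ne_zero fun h => hfin (Subgroup.relIndex_eq_zero_of_le_right snd_le h)

end AmbiguousClasses

section InvariantIdeals

theorem prod_smul_eq_prod_orbit_pow {G M : Type*} [Group G] [Fintype G] [CommMonoid M]
    [MulAction G M] (x : M) [Fintype (MulAction.orbit G x)] :
    ∏ g : G, g • x =
      (∏ y ∈ (MulAction.orbit G x).toFinset, y) ^ Nat.card (MulAction.stabilizer G x) := by
  classical
  have image_eq : Finset.univ.image (· • x : G → M) = (MulAction.orbit G x).toFinset := by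
    ext y
    simp only [Finset.mem_image, Finset.mem_univ, true_and, Set.mem_toFinset,
      MulAction.mem_orbit_iff]
  rw [Finset.prod_comp (fun y => y) (· • x : G → M), image_eq, ← Finset.prod_pow]
  refine Finset.prod_congr rfl fun y hy => ?_
  obtain ⟨h, rfl⟩ := MulAction.mem_orbit_iff.1 (Set.mem_toFinset.1 hy)
  rw [← Fintype.card_subtype, ← Nat.card_eq_fintype_card]
  congr 1
  refine Nat.card_congr ((Equiv.mulLeft h⁻¹).subtypeEquiv fun g => ?_)
  rw [Equiv.coe_mulLeft, MulAction.mem_stabilizer_iff, mul_smul, inv_smul_eq_iff]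

open NumberField

variable {k L : Type*} [Field k] [Field L] [Algebra k L]

theorem smul_map_algebraMap (g : Gal(L/k)) (I : Ideal (𝓞 k)) :
    g • I.map (algebraMap (𝓞 k) (𝓞 L)) = I.map (algebraMap (𝓞 k) (𝓞 L)) := by
  rw [smul_ideal_map]
  congr 1
  exact RingHom.ext fun a => RingOfIntegers.ext (g.commutes a)

variable [NumberField k]

theorem perfectField_residueField_under {P : Ideal (𝓞 L)} [P.IsPrime] (hP : P ≠ ⊥) :
    PerfectField (P.under (𝓞 k)).ResidueField := by
  have under_ne_bot : P.under (𝓞 k) ≠ ⊥ := Ideal.IsIntegral.comap_ne_bot _ hP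
  have : (P.under (𝓞 k)).IsMaximal := Ideal.IsPrime.isMaximal inferInstance under_ne_bot
  have := Ideal.finiteQuotientOfFreeOfNeBot _ under_ne_bot
  have : Finite (P.under (𝓞 k)).ResidueField :=
    Finite.of_surjective _ (Ideal.bijective_algebraMap_quotient_residueField _).2
  infer_instance

variable [NumberField L] [IsGalois k L]

theorem map_under_eq_prod_orbit_pow {P : Ideal (𝓞 L)} [P.IsPrime] (hP : P ≠ ⊥)
    [Fintype (MulAction.orbit Gal(L/k) P)] :
    (P.under (𝓞 k)).map (algebraMap (𝓞 k) (𝓞 L)) =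
      (∏ Q ∈ (MulAction.orbit Gal(L/k) P).toFinset, Q) ^ Nat.card (P.inertia Gal(L/k)) := by
  have := perfectField_residueField_under (k := k) hP
  have under_ne_bot : P.under (𝓞 k) ≠ ⊥ := Ideal.IsIntegral.comap_ne_bot _ hP
  have : (P.under (𝓞 k)).IsMaximal := Ideal.IsPrime.isMaximal inferInstance under_ne_bot
  have orbit_eq := Algebra.IsInvariant.orbit_eq_primesOver (𝓞 k) (𝓞 L) Gal(L/k)
    (P.under (𝓞 k)) P
  rw [Ideal.map_algebraMap_eq_finsetProd_pow under_ne_bot, ← Finset.prod_pow,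
    Ideal.card_inertia_eq_ramificationIdxIn (P.under (𝓞 k)) P]
  refine Finset.prod_congr (Set.toFinset_congr orbit_eq.symm) fun Q hQ => ?_
  rw [Set.mem_toFinset, orbit_eq] at hQ
  obtain ⟨_, _⟩ := hQ
  rw [Ideal.ramificationIdxIn_eq_ramificationIdx (P.under (𝓞 k)) Q Gal(L/k)]

theorem prod_smul_eq_map_relNorm (I : Ideal (𝓞 L)) :
    ∏ g : Gal(L/k), g • I = (Ideal.relNorm (𝓞 k) I).map (algebraMap (𝓞 k) (𝓞 L)) := by
  induction I using UniqueFactorizationMonoid.induction_on_prime with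
  | h₁ =>
    rw [Ideal.zero_eq_bot, Ideal.relNorm_bot, Ideal.map_bot]
    exact Finset.prod_eq_zero (Finset.mem_univ 1) (Ideal.smul_bot 1)
  | h₂ I hI =>
    simp only [Ideal.isUnit_iff.1 hI, smul_ideal_top, Ideal.relNorm_top, Ideal.map_top,
      Finset.prod_const, Ideal.top_pow]
  | h₃ I P _ hP ih =>
    simp only [smul_mul', Finset.prod_mul_distrib, map_mul, Ideal.map_mul, ih]
    congr 1
    have : P.IsPrime := Ideal.isPrime_of_prime hP
    have : P.IsMaximal := Ideal.IsPrime.isMaximal this hP.ne_zero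
    have : (P.under (𝓞 k)).IsMaximal :=
      Ideal.IsPrime.isMaximal inferInstance (Ideal.IsIntegral.comap_ne_bot _ hP.ne_zero)
    have := perfectField_residueField_under (k := k) hP.ne_zero
    let : Fintype (MulAction.orbit Gal(L/k) P) :=
      (Set.finite_range fun g : Gal(L/k) => g • P).fintype
    rw [prod_smul_eq_prod_orbit_pow, Ideal.relNorm_eq_pow_of_isMaximal P (P.under (𝓞 k)),
      Ideal.map_pow, map_under_eq_prod_orbit_pow hP.ne_zero, ← pow_mul,
      Ideal.card_stabilizer_eq_card_inertia_mul_finrank (P.under (𝓞 k)) P]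

theorem map_under_dvd_of_inertia_eq_bot {P I : Ideal (𝓞 L)} [P.IsPrime] (hP : P ≠ ⊥)
    (inertia : P.inertia Gal(L/k) = ⊥) (hI : ∀ g : Gal(L/k), g • I = I) (hPI : P ∣ I) :
    (P.under (𝓞 k)).map (algebraMap (𝓞 k) (𝓞 L)) ∣ I := by
  let : Fintype (MulAction.orbit Gal(L/k) P) :=
    (Set.finite_range fun g : Gal(L/k) => g • P).fintype
  rw [map_under_eq_prod_orbit_pow hP, inertia, Subgroup.card_bot, pow_one]
  refine Finset.prod_primes_dvd I (fun Q hQ => ?_) fun Q hQ => ?_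
  all_goals obtain ⟨g, rfl⟩ := Set.mem_toFinset.1 hQ
  · exact Ideal.prime_of_isPrime (smul_ideal_ne_bot g hP) inferInstance
  · rw [← hI g]
    exact Ideal.dvd_iff_le.2 (Ideal.pointwise_smul_le_pointwise_smul_iff.2 (Ideal.le_of_dvd hPI))

theorem induction_on_smul_eq [Fact (Nat.card Gal(L/k)).Prime] {motive : Ideal (𝓞 L) → Prop}
    (map : ∀ I : Ideal (𝓞 k), I ≠ ⊥ → motive (I.map (algebraMap (𝓞 k) (𝓞 L))))
    (prime : ∀ P : Ideal (𝓞 L), P.IsPrime → P ≠ ⊥ → P.inertia Gal(L/k) = ⊤ → motive P)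
    (mul : ∀ I J, motive I → motive J → motive (I * J)) {I : Ideal (𝓞 L)} (hI : I ≠ ⊥)
    (hinv : ∀ g : Gal(L/k), g • I = I) : motive I := by
  induction I using WellFoundedGT.induction with
  | ind I ih =>
    by_cases I_top : I = ⊤
    · rw [I_top, ← Ideal.map_top (algebraMap (𝓞 k) (𝓞 L))]
      exact map ⊤ top_ne_bot
    obtain ⟨P, hP, hPI⟩ := Ideal.exists_le_maximal I I_top
    have P_ne : P ≠ ⊥ := fun h => hI (le_bot_iff.1 (h ▸ hPI))
    obtain ⟨A, hA, A_inv, A_le, J, rfl⟩ :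
        ∃ A, motive A ∧ (∀ g : Gal(L/k), g • A = A) ∧ A ≤ P ∧ A ∣ I := by
      obtain inertia | inertia := (P.inertia Gal(L/k)).eq_bot_or_eq_top_of_prime_card
      · exact ⟨_, map _ (Ideal.IsIntegral.comap_ne_bot _ P_ne), fun g => smul_map_algebraMap g _,
          Ideal.map_comap_le,
          map_under_dvd_of_inertia_eq_bot P_ne inertia hinv (Ideal.dvd_iff_le.2 hPI)⟩
      · refine ⟨P, prime P hP.isPrime P_ne inertia, fun g => ?_, le_rfl, Ideal.dvd_iff_le.2 hPI⟩
        exact Ideal.inertia_le_stabilizer (M := Gal(L/k)) P (inertia ▸ Subgroup.mem_top g)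
    have A_ne : A ≠ 0 := left_ne_zero_of_mul hI
    have J_ne : J ≠ 0 := right_ne_zero_of_mul hI
    have J_inv (g : Gal(L/k)) : g • J = J :=
      mul_left_cancel₀ A_ne (by conv_lhs => rw [← A_inv g, ← smul_mul', hinv])
    refine mul _ _ hA (ih J (lt_of_le_of_ne Ideal.mul_le_right fun h => ?_) J_ne J_inv)
    have : A = 1 := mul_right_cancel₀ J_ne (h.trans (one_mul J).symm)
    exact hP.ne_top (top_le_iff.1 (Ideal.one_eq_top.symm.trans this.symm ▸ A_le))

end InvariantIdeals

section Units

theorem smul_eq_of_forall_mem_zpowers {G X : Type*} [Group G] [MulAction G X] {σ : G}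
    (hσ : ∀ τ, τ ∈ Subgroup.zpowers σ) {x : X} (hx : σ • x = x) (g : G) : g • x = x :=
  Subgroup.zpowers_le.2 (MulAction.mem_stabilizer_iff.2 hx) (hσ g)

/- If every element were of the form `t * (x / s x)` with `t` fixed, then applying this twice
would write `η` as a fixed element times `v ^ ((1 - s) ^ 2)`, and
`(1 - s) ^ 2 = 1 + s + s ^ 2 - 3 * s`. -/
theorem exists_forall_mul_map_ne {E : Type*} [CommGroup E] {s : E →* E}
    (hs : ∀ x, s (s (s x)) = x) {η : E} (hη : ∀ t ∈ fixedSubgroup s, ∀ x, η ≠ t * x ^ 3) :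
    ∃ e, ∀ t ∈ fixedSubgroup s, ∀ x, e * s x ≠ t * x := by
  by_contra! hcon
  obtain ⟨t, ht, u, hu⟩ := hcon η
  obtain ⟨t', ht', v, hv⟩ := hcon u
  have norm_fixed : v * s v * s (s v) ∈ fixedSubgroup s := by
    change s (v * s v * s (s v)) = v * s v * s (s v)
    rw [map_mul, map_mul, hs, mul_comm, mul_assoc]
  have hu' : η = t * u / s u := eq_div_of_mul_eq' hu
  have hv' : u = t' * v / s v := eq_div_of_mul_eq' hv
  have hsv : s u = t' * s v / s (s v) := by
    rw [hv', map_div, map_mul, show s t' = t' from ht']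
  refine hη _ (mul_mem ht norm_fixed) (s v)⁻¹ ?_
  rw [hu', hsv, hv']
  apply Additive.ofMul.injective
  simp only [ofMul_mul, ofMul_div, ofMul_pow, ofMul_inv]
  abel

open NumberField

theorem exists_unit_ne_torsion_mul_pow (L : Type*) [Field L] [NumberField L]
    (hrank : 0 < Units.rank L) {n : ℕ} (hn : 2 ≤ n) :
    ∃ η : (𝓞 L)ˣ, ∀ z ∈ Units.torsion L, ∀ u, η ≠ z * u ^ n := by
  let i : Fin (Units.rank L) := ⟨0, hrank⟩
  refine ⟨Units.fundSystem L i, fun z hz u h => ?_⟩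
  obtain ⟨⟨ζ, e⟩, he, -⟩ := Units.exist_unique_eq_mul_prod L u
  have exponents_eq := (Units.exist_unique_eq_mul_prod L (Units.fundSystem L i)).unique
    (y₁ := (1, Pi.single i 1)) (y₂ := (⟨z, hz⟩ * ζ ^ n, fun j => e j * n)) ?_ ?_
  · have : (1 : ℤ) = e i * n := by simpa using congrFun (congrArg Prod.snd exponents_eq) i
    exact absurd (Int.eq_one_of_mul_eq_one_left (Int.natCast_nonneg n) this.symm) (by omega)
  · rw [OneMemClass.coe_one, one_mul, Finset.prod_eq_single i]
    · simp only [Pi.single_eq_same, zpow_one]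
    · intro j _ hj
      simp only [Pi.single_eq_of_ne hj, zpow_zero]
    · exact fun h => absurd (Finset.mem_univ i) h
  · rw [h]
    conv_lhs => rw [he]
    simp only [mul_pow, Subgroup.coe_mul, SubmonoidClass.coe_pow, zpow_mul, zpow_natCast,
      Finset.prod_pow, mul_assoc]

variable {k L : Type*} [Field k] [Field L] [Algebra k L]

/-- The action of an automorphism of `L` on the units of `L`. -/
def galUnits (σ : Gal(L/k)) : (𝓞 L)ˣ →* (𝓞 L)ˣ :=
  Units.map (MulDistribMulAction.toMonoidHom (𝓞 L) σ)

variable [NumberField k] [NumberField L] [IsGalois k L]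

theorem exists_algebraMap_eq_of_smul_eq {σ : Gal(L/k)} (hσ : ∀ τ, τ ∈ Subgroup.zpowers σ)
    {x : 𝓞 L} (hx : σ • x = x) : ∃ y, algebraMap (𝓞 k) (𝓞 L) y = x :=
  Algebra.IsInvariant.isInvariant (G := Gal(L/k)) x (smul_eq_of_forall_mem_zpowers hσ hx)

theorem exists_units_map_eq_of_galUnits_eq {σ : Gal(L/k)} (hσ : ∀ τ, τ ∈ Subgroup.zpowers σ)
    {u : (𝓞 L)ˣ} (hu : galUnits σ u = u) :
    ∃ v : (𝓞 k)ˣ, Units.map (algebraMap (𝓞 k) (𝓞 L)).toMonoidHom v = u := by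
  obtain ⟨y, hy⟩ := exists_algebraMap_eq_of_smul_eq hσ (congrArg Units.val hu)
  obtain ⟨z, hz⟩ := exists_algebraMap_eq_of_smul_eq hσ (congrArg Units.val
    ((map_inv (galUnits σ) u).trans (congrArg Inv.inv hu)))
  have yz : y * z = 1 := FaithfulSMul.algebraMap_injective (𝓞 k) (𝓞 L) (by
    rw [map_mul, hy, hz, Units.mul_inv, map_one])
  exact ⟨Units.mkOfMulEqOne y z yz, Units.ext hy⟩

theorem exists_unit_forall_mul_galUnits_ne [Finite (𝓞 k)ˣ] (hcard : Nat.card Gal(L/k) = 3)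
    (hrank : 0 < Units.rank L) {σ : Gal(L/k)} (hσ : ∀ τ, τ ∈ Subgroup.zpowers σ) :
    ∃ η : (𝓞 L)ˣ, ∀ v ∈ fixedSubgroup (galUnits σ), ∀ u, η * galUnits σ u ≠ v * u := by
  obtain ⟨η, hη⟩ := exists_unit_ne_torsion_mul_pow L hrank (n := 3) (by norm_num)
  refine exists_forall_mul_map_ne (fun u => Units.ext ?_) fun v hv => hη v ?_
  · change σ • σ • σ • (u : 𝓞 L) = u
    rw [← mul_smul, ← mul_smul, ← pow_three', ← hcard, pow_card_eq_one', one_smul]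
  · obtain ⟨v, rfl⟩ := exists_units_map_eq_of_galUnits_eq hσ hv
    exact (CommGroup.mem_torsion _).2 (MonoidHom.isOfFinOrder _ (isOfFinOrder_of_finite v))

end Units

section CubeRootPrimes

variable {R : Type*} [CommRing R]

/-- The ideal `(a, c - w)`. If `a` is a cube root of a prime `N ≡ 1 (mod 3)`, `w` a primitive cube
root of unity and `c` an integer with the same residue as a cube root of unity modulo `N`, then
this is a prime factor of `a`. -/
def cubeRootPrime (a w : R) (c : ℤ) : Ideal R :=
  Ideal.span {a, (c : R) - w}

theorem smul_cubeRootPrime {G : Type*} [Group G] [MulSemiringAction G R] (g : G) (a w : R)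
    (c : ℤ) : g • cubeRootPrime a w c = cubeRootPrime (g • a) (g • w) c := by
  refine (Ideal.map_span _ _).trans (congrArg Ideal.span ?_)
  rw [Set.image_pair, map_sub, map_intCast]
  rfl

theorem cubeRootPrime_units_mul (u : Rˣ) (a w : R) (c : ℤ) :
    cubeRootPrime (u * a) w c = cubeRootPrime a w c := by
  rw [cubeRootPrime, cubeRootPrime, Ideal.span_insert, Ideal.span_insert,
    Ideal.span_singleton_mul_left_unit u.isUnit]

/- The difference of `c - w ^ 2` and `c - w` divides `3`, which is prime to `N = a ^ 3`. -/
theorem cubeRootPrime_mul_cubeRootPrime {N c : ℤ} (hN : IsCoprime 3 N) (hc : N ∣ c ^ 2 + c + 1)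
    {a w : R} (ha : a ^ 3 = N) (hw : w ^ 2 + w + 1 = 0) :
    cubeRootPrime a w c * cubeRootPrime a (w ^ 2) c = Ideal.span {a} := by
  obtain ⟨m, hm⟩ := hc
  have a_dvd : a ∣ (c - w) * (c - w ^ 2) := by
    have : (c : R) ^ 2 + c + 1 = N * m := mod_cast congrArg (Int.cast : ℤ → R) hm
    exact ⟨a ^ 2 * m, by linear_combination (-(c : R) + w - 1) * hw + this - m * ha⟩
  rw [cubeRootPrime, cubeRootPrime, Ideal.span_pair_mul_span_pair]
  refine le_antisymm ?_ ((Ideal.span_singleton_le_iff_mem _).2 ?_)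
  · rw [Ideal.span_le]
    rintro x (rfl | rfl | rfl | rfl)
    all_goals rw [SetLike.mem_coe, Ideal.mem_span_singleton]
    exacts [dvd_mul_right _ _, dvd_mul_right _ _, dvd_mul_left _ _, a_dvd]
  · obtain ⟨u, v, huv⟩ := hN
    have huv : (u : R) * 3 + v * N = 1 := mod_cast congrArg (Int.cast : ℤ → R) huv
    have a_eq : a = v * a ^ 2 * (a * a) + u * (w ^ 2 - w) * (a * (c - w ^ 2)) +
        -(u * (w ^ 2 - w)) * ((c - w) * a) := by
      linear_combination -a * huv - v * a * ha + a * u * (3 - 3 * w + w ^ 2) * hw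
    conv => enter [2]; rw [a_eq]
    refine Ideal.add_mem _ (Ideal.add_mem _ ?_ ?_) ?_
    all_goals exact Ideal.mul_mem_left _ _ (Ideal.subset_span (by simp))

theorem sq_add_self_add_one_of_isPrimitiveRoot [IsDomain R] {w : R} (hw : IsPrimitiveRoot w 3) :
    w ^ 2 + w + 1 = 0 := by
  rw [← hw.geom_sum_eq_zero (by norm_num), Finset.sum_range_succ, Finset.sum_range_succ,
    Finset.sum_range_one]
  ring

theorem exists_dvd_sq_add_self_add_one {N : ℕ} (hN : N.Prime) (hNmod : N % 3 = 1) :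
    ∃ c : ℤ, (N : ℤ) ∣ c ^ 2 + c + 1 := by
  have := Fact.mk hN
  have three_dvd : 3 ∣ Nat.card (ZMod N)ˣ := by
    rw [Nat.card_eq_fintype_card, ZMod.card_units]
    omega
  have := Fact.mk Nat.prime_three
  obtain ⟨x, hx⟩ := exists_prime_orderOf_dvd_card' 3 three_dvd
  have root := sq_add_self_add_one_of_isPrimitiveRoot
    (IsPrimitiveRoot.coe_units_iff.2 (hx ▸ IsPrimitiveRoot.orderOf x))
  refine ⟨(x : ZMod N).val, (ZMod.intCast_zmod_eq_zero_iff_dvd _ N).1 ?_⟩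
  push_cast
  rw [ZMod.natCast_zmod_val, root]

open NumberField

theorem absNorm_smul {F L : Type*} [Field F] [Field L] [NumberField L] [Algebra F L]
    (g : Gal(L/F)) (I : Ideal (𝓞 L)) : Ideal.absNorm (g • I) = Ideal.absNorm I := by
  rw [← Ideal.absNorm_relNorm ℤ, Ideal.relNorm_smul, Ideal.absNorm_relNorm]

theorem absNorm_span_pow_of_pow_eq_natCast {L : Type*} [Field L] [NumberField L] {a : 𝓞 L}
    {n N : ℕ} (ha : a ^ n = N) :
    Ideal.absNorm (Ideal.span {a}) ^ n = N ^ Module.finrank ℚ L := by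
  rw [← map_pow, Ideal.span_singleton_pow, ha, Ideal.absNorm_span_natCast, RingOfIntegers.rank]

theorem absNorm_cubeRootPrime {F L : Type*} [Field F] [Field L] [NumberField L] [Algebra F L]
    (hdeg : Module.finrank ℚ L = 6) {N : ℕ} {c : ℤ} (hN : IsCoprime (3 : ℤ) N)
    (hc : (N : ℤ) ∣ c ^ 2 + c + 1) {a w : 𝓞 L} (ha : a ^ 3 = N) (hw : w ^ 2 + w + 1 = 0)
    {τ : Gal(L/F)} (hτa : τ • a = a) (hτw : τ • w = w ^ 2) :
    Ideal.absNorm (cubeRootPrime a w c) = N := by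
  have absNorm_a : Ideal.absNorm (Ideal.span {a}) = N ^ 2 := by
    refine Nat.pow_left_injective three_ne_zero ?_
    change Ideal.absNorm (Ideal.span {a}) ^ 3 = (N ^ 2) ^ 3
    rw [absNorm_span_pow_of_pow_eq_natCast ha, hdeg, ← pow_mul]
  refine Nat.pow_left_injective two_ne_zero ?_
  change Ideal.absNorm (cubeRootPrime a w c) ^ 2 = N ^ 2
  rw [← absNorm_a, ← cubeRootPrime_mul_cubeRootPrime hN hc (by exact_mod_cast ha) hw, map_mul,
    ← hτw, ← congrArg (cubeRootPrime · (τ • w) c) hτa, ← smul_cubeRootPrime, absNorm_smul, sq]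

end CubeRootPrimes

section TotallyRamifiedPrimes

theorem isPrimitiveRoot_map {A B : Type*} [CommRing A] [IsDomain A] [CommRing B] [IsDomain B]
    (f : A →+* B) {n : ℕ} [NeZero (n : B)] {x : A} (hx : IsPrimitiveRoot x n) :
    IsPrimitiveRoot (f x) n := by
  rw [← Polynomial.isRoot_cyclotomic_iff, ← Polynomial.map_cyclotomic n f]
  exact (hx.isRoot_cyclotomic (NeZero.of_neZero_natCast B).pos).map

theorem sq_dvd_card_sub_one {F : Type*} [Field F] {n : ℕ} (hn : n ≠ 0) {x : F}
    (hx : IsPrimitiveRoot (x ^ n) n) : n ^ 2 ∣ Nat.card F - 1 := by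
  have x_ne : x ≠ 0 := by
    rintro rfl
    exact hx.ne_zero hn (zero_pow hn)
  have order_eq : orderOf x = n * (orderOf x).gcd n := by
    conv_rhs => enter [1]; rw [hx.eq_orderOf, orderOf_pow' x hn]
    exact (Nat.div_mul_cancel (Nat.gcd_dvd_left _ _)).symm
  have n_dvd : n ∣ orderOf x := ⟨_, order_eq⟩
  rw [Nat.gcd_eq_right n_dvd, ← sq] at order_eq
  rw [← order_eq, ← Nat.card_units, ← Units.val_mk0 x_ne, orderOf_units]
  exact orderOf_dvd_natCard _

open NumberField

variable {k L : Type*} [Field k] [NumberField k] [Field L] [NumberField L] [Algebra k L]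
  [IsGalois k L]

theorem algebraMap_intNorm_eq_prod_smul (x : 𝓞 L) :
    algebraMap (𝓞 k) (𝓞 L) (Algebra.intNorm (𝓞 k) (𝓞 L) x) = ∏ g : Gal(L/k), g • x := by
  refine RingOfIntegers.ext ?_
  change algebraMap k L (algebraMap (𝓞 k) k (Algebra.intNorm (𝓞 k) (𝓞 L) x)) = _
  rw [algebraMap_intNorm, Algebra.norm_eq_prod_automorphisms]
  exact (map_prod (algebraMap (𝓞 L) L) (fun g : Gal(L/k) => g • x) Finset.univ).symm

theorem algebraMap_intNorm_sub_pow_mem {P : Ideal (𝓞 L)} (inertia : P.inertia Gal(L/k) = ⊤)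
    (x : 𝓞 L) : algebraMap (𝓞 k) (𝓞 L) (Algebra.intNorm (𝓞 k) (𝓞 L) x) -
      x ^ Nat.card Gal(L/k) ∈ P := by
  have mk_smul (g : Gal(L/k)) : Ideal.Quotient.mk P (g • x) = Ideal.Quotient.mk P x :=
    Ideal.Quotient.eq.2 (AddSubgroup.mem_inertia.1 (inertia ▸ Subgroup.mem_top g) x)
  rw [← Ideal.Quotient.eq, algebraMap_intNorm_eq_prod_smul, map_prod, map_pow]
  simp only [mk_smul, Finset.prod_const, Finset.card_univ, Nat.card_eq_fintype_card]

/- An element of `L` whose norm is a unit is a unit at `P`, and its norm is congruent to its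
`n`-th power modulo `P`. -/
theorem exists_pow_sub_mul_pow_mem {P : Ideal (𝓞 L)} [hP : P.IsPrime] (P_ne : P ≠ ⊥)
    (inertia : P.inertia Gal(L/k) = ⊤) {u : (𝓞 k)ˣ} (hu : u ∈ unitsInNorms k L) :
    ∃ x y : 𝓞 L, y ∉ P ∧
      x ^ Nat.card Gal(L/k) - algebraMap (𝓞 k) (𝓞 L) u * y ^ Nat.card Gal(L/k) ∈ P := by
  obtain ⟨z, hz⟩ := hu
  have norm_z : Algebra.norm k (z : L) = algebraMap (𝓞 k) k u := congrArg Units.val hz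
  have main {x y : 𝓞 L} (h : z * (y : L) = x) :
      x ^ Nat.card Gal(L/k) - algebraMap (𝓞 k) (𝓞 L) u * y ^ Nat.card Gal(L/k) ∈ P := by
    have norm_x : Algebra.intNorm (𝓞 k) (𝓞 L) x = u * Algebra.intNorm (𝓞 k) (𝓞 L) y := by
      apply RingOfIntegers.coe_injective
      rw [map_mul, algebraMap_intNorm, algebraMap_intNorm, ← h, map_mul, norm_z]
    have norm_y := Ideal.mul_mem_left P (algebraMap (𝓞 k) (𝓞 L) u)
      (algebraMap_intNorm_sub_pow_mem inertia y)
    convert sub_mem norm_y (algebraMap_intNorm_sub_pow_mem inertia x) using 1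
    rw [norm_x, map_mul]
    ring
  let v : IsDedekindDomain.HeightOneSpectrum (𝓞 L) := ⟨P, hP, P_ne⟩
  obtain ⟨x, ⟨y, hy⟩, h | h⟩ := v.exists_primeCompl_mul_eq_or_mul_eq (z : L)
  · exact ⟨x, y, hy, main h⟩
  · refine ⟨y, x, fun hx => hy (hP.mem_of_pow_mem (Nat.card Gal(L/k)) ?_), main h⟩
    exact (Submodule.sub_mem_iff_left P (Ideal.mul_mem_left P _
      (Ideal.pow_mem_of_mem P hx _ Nat.card_pos))).1 (main h)

theorem sq_dvd_absNorm_sub_one {n : ℕ} (hcard : Nat.card Gal(L/k) = n) {ω : (𝓞 k)ˣ}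
    (hω : IsPrimitiveRoot ω n) (hmem : ω ∈ unitsInNorms k L) {P : Ideal (𝓞 L)} [hP : P.IsPrime]
    (P_ne : P ≠ ⊥) (inertia : P.inertia Gal(L/k) = ⊤) (hn : (n : 𝓞 L) ∉ P) :
    n ^ 2 ∣ Ideal.absNorm P - 1 := by
  obtain ⟨x, y, hy, hxy⟩ := exists_pow_sub_mul_pow_mem P_ne inertia hmem
  have := hP.isMaximal P_ne
  let := Ideal.Quotient.field P
  have := Ideal.finiteQuotientOfFreeOfNeBot P P_ne
  let r := (Ideal.Quotient.mk P).comp (algebraMap (𝓞 k) (𝓞 L))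
  have : NeZero (n : 𝓞 L ⧸ P) := ⟨by rwa [← map_natCast (Ideal.Quotient.mk P), Ne,
    Ideal.Quotient.eq_zero_iff_mem]⟩
  have root_eq : (Ideal.Quotient.mk P x / Ideal.Quotient.mk P y) ^ n = r ω := by
    rw [div_pow, div_eq_iff, ← map_pow, ← map_pow]
    · rw [← hcard]
      exact Ideal.Quotient.eq.2 hxy
    · exact pow_ne_zero _ (by rwa [Ne, Ideal.Quotient.eq_zero_iff_mem])
  rw [Ideal.absNorm_apply, Submodule.cardQuot_apply]
  refine sq_dvd_card_sub_one (hcard ▸ Nat.card_pos.ne')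
    (x := Ideal.Quotient.mk P x / Ideal.Quotient.mk P y) ?_
  rw [root_eq]
  exact isPrimitiveRoot_map r (IsPrimitiveRoot.coe_units_iff.2 hω)

end TotallyRamifiedPrimes

section RamifiedPrimes

/- With `l = w - 1` the equation `(1 + l * y) ^ 3 = 1 + 9 * m` becomes an equation for `y` with
unit leading coefficient, since `3 = -w ^ 2 * l ^ 2`. -/
theorem sub_one_dvd_sub_one {R : Type*} [CommRing R] [IsDomain R] [IsIntegrallyClosed R]
    (three_ne : (3 : R) ≠ 0) {a w m : R} (hw : w ^ 2 + w + 1 = 0) (ha : a ^ 3 = 9 * m + 1) :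
    w - 1 ∣ a - 1 := by
  let F := FractionRing R
  let f := algebraMap R F
  have l_ne : f (w - 1) ≠ 0 := by
    rw [Ne, FaithfulSMul.algebraMap_eq_zero_iff]
    intro l_eq
    exact three_ne (by linear_combination hw - (w + 2) * l_eq)
  have three_eq : (3 : R) = -w ^ 2 * (w - 1) ^ 2 := by
    linear_combination (w ^ 2 - 3 * w + 3) * hw
  have nine_eq : (9 : R) = w * (w - 1) ^ 4 := by
    linear_combination (-w ^ 3 + 5 * w ^ 2 - 10 * w + 9) * hw
  let y : F := f (a - 1) / f (w - 1)
  have a_eq : f a = 1 + f (w - 1) * y := by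
    rw [mul_div_cancel₀ _ l_ne, map_sub, map_one, add_sub_cancel]
  have y_root : y ^ 3 + f (-w ^ 2 * (w - 1)) * y ^ 2 + f (-w ^ 2) * y + f (-(m * w * (w - 1))) =
      0 := by
    have := congrArg f ha
    rw [map_add, map_mul, map_pow, map_one, nine_eq, a_eq] at this
    have three_eq := congrArg f three_eq
    refine (mul_eq_zero.1 (?_ : f (w - 1) ^ 3 * _ = 0)).resolve_left (pow_ne_zero 3 l_ne)
    simp only [map_mul, map_pow, map_neg, map_ofNat] at this three_eq ⊢
    linear_combination this - (f (w - 1) * y + f (w - 1) ^ 2 * y ^ 2) * three_eq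
  have y_integral : IsIntegral R y :=
    ⟨Polynomial.X ^ 3 + (Polynomial.C (-w ^ 2 * (w - 1)) * Polynomial.X ^ 2 +
      Polynomial.C (-w ^ 2) * Polynomial.X + Polynomial.C (-(m * w * (w - 1)))),
      Polynomial.monic_X_pow_add (by compute_degree; norm_num), by
        simp only [Polynomial.eval₂_add, Polynomial.eval₂_mul, Polynomial.eval₂_C,
          Polynomial.eval₂_X, Polynomial.eval₂_pow]
        linear_combination y_root⟩
  obtain ⟨z, hz⟩ := IsIntegrallyClosed.isIntegral_iff.1 y_integral
  refine ⟨z, IsFractionRing.injective R F ?_⟩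
  rw [map_mul, hz, mul_div_cancel₀ _ l_ne]

open NumberField

theorem exists_intCast_sub_mem {L : Type*} [Field L] [NumberField L] {P : Ideal (𝓞 L)}
    (hP : (Ideal.absNorm P).Prime) (x : 𝓞 L) : ∃ m : ℤ, x - m ∈ P := by
  have card_quot : Nat.card (𝓞 L ⧸ P) = Ideal.absNorm P :=
    (Submodule.cardQuot_apply P).symm.trans (Ideal.absNorm_apply P).symm
  have : Finite (𝓞 L ⧸ P) := Nat.finite_of_card_ne_zero (card_quot ▸ hP.ne_zero)
  have := Fintype.ofFinite (𝓞 L ⧸ P)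
  let e := ZMod.ringEquivOfPrime (𝓞 L ⧸ P) hP (Nat.card_eq_fintype_card.symm.trans card_quot)
  obtain ⟨m, hm⟩ := ZMod.intCast_surjective (e.symm (Ideal.Quotient.mk P x))
  exact ⟨m, Ideal.Quotient.eq.1 (e.symm.injective (by rw [← hm, map_intCast, map_intCast]))⟩

variable {k L : Type*} [Field k] [Field L] [NumberField L] [Algebra k L]

theorem inertia_eq_top_of_absNorm_prime {P : Ideal (𝓞 L)} (hP : (Ideal.absNorm P).Prime)
    (hinv : ∀ g : Gal(L/k), g • P = P) : P.inertia Gal(L/k) = ⊤ := by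
  refine eq_top_iff.2 fun g _ => AddSubgroup.mem_inertia.2 fun x => ?_
  obtain ⟨m, hm⟩ := exists_intCast_sub_mem hP x
  have smul_mem : g • (x - m) ∈ P := by
    conv => enter [1]; rw [← hinv g]
    exact Ideal.smul_mem_pointwise_smul g _ P hm
  have smul_eq : g • (x - m) = g • x - m :=
    (smul_sub g x _).trans
      (congrArg _ (map_intCast (MulSemiringAction.toRingHom Gal(L/k) (𝓞 L) g) m))
  rw [smul_eq] at smul_mem
  have sub_mem := P.sub_mem smul_mem hm
  rwa [sub_sub_sub_cancel_right] at sub_mem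

variable [NumberField k] [IsGalois k L]

theorem eq_of_inertia_eq_top {P Q : Ideal (𝓞 L)} [P.IsPrime] [Q.IsPrime]
    (inertia : P.inertia Gal(L/k) = ⊤) {x : 𝓞 k} (hx : Prime x)
    (hxP : algebraMap (𝓞 k) (𝓞 L) x ∈ P) (hxQ : algebraMap (𝓞 k) (𝓞 L) x ∈ Q) : P = Q := by
  have span_prime : (Ideal.span {x}).IsPrime := (Ideal.span_singleton_prime hx.ne_zero).2 hx
  have span_maximal := span_prime.isMaximal (span_singleton_ne_bot hx.ne_zero)
  have liesOver {I : Ideal (𝓞 L)} [I.IsPrime] (hI : algebraMap (𝓞 k) (𝓞 L) x ∈ I) :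
      I.LiesOver (Ideal.span {x}) :=
    ⟨span_maximal.eq_of_le (Ideal.IsPrime.ne_top inferInstance)
      ((Ideal.span_singleton_le_iff_mem _).2 hI)⟩
  have := liesOver hxP
  have := liesOver hxQ
  obtain ⟨g, rfl⟩ := Ideal.exists_smul_eq_of_isGaloisGroup (Ideal.span {x}) P Q Gal(L/k)
  exact (Ideal.inertia_le_stabilizer (M := Gal(L/k)) P (inertia ▸ Subgroup.mem_top g)).symm

end RamifiedPrimes

section EisensteinUnits

open NumberField

variable {k : Type*} [Field k] [NumberField k] [IsCyclotomicExtension {3} ℚ k] {ω : (𝓞 k)ˣ}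

theorem eq_pow_or_eq_neg_pow (hω : IsPrimitiveRoot ω 3) (v : (𝓞 k)ˣ) :
    ∃ i, v = ω ^ i ∨ v = -ω ^ i := by
  have hζ : IsPrimitiveRoot ((ω : 𝓞 k) : k) 3 :=
    (IsPrimitiveRoot.coe_units_iff.2 hω).map_of_injective RingOfIntegers.coe_injective
  have mem := IsCyclotomicExtension.Rat.Three.Units.mem hζ v
  have unit_eq : (hζ.toInteger_isPrimitiveRoot.isUnit (by decide)).unit = ω :=
    Units.ext (RingOfIntegers.ext rfl)
  rw [unit_eq] at mem
  simp only [List.mem_cons, List.not_mem_nil, or_false] at mem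
  rcases mem with h | h | h | h | h | h
  exacts [⟨0, .inl (by simpa using h)⟩, ⟨0, .inr (by simpa using h)⟩,
    ⟨1, .inl (by simpa using h)⟩, ⟨1, .inr (by simpa using h)⟩, ⟨2, .inl h⟩, ⟨2, .inr h⟩]

theorem prime_sub_one_of_isPrimitiveRoot (hω : IsPrimitiveRoot ω 3) : Prime ((ω : 𝓞 k) - 1) :=
  IsPrimitiveRoot.zeta_sub_one_prime' ((IsPrimitiveRoot.coe_units_iff.2 hω).map_of_injective
    RingOfIntegers.coe_injective)

theorem finite_units_of_isPrimitiveRoot (hω : IsPrimitiveRoot ω 3) : Finite (𝓞 k)ˣ := by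
  have finite_powers := finite_zpowers.2 (hω.isOfFinOrder three_ne_zero)
  refine Set.finite_univ_iff.1 ((finite_powers.union finite_powers.neg).subset fun v _ => ?_)
  obtain ⟨i, rfl | rfl⟩ := eq_pow_or_eq_neg_pow hω v
  · exact .inl ⟨i, zpow_natCast ω i⟩
  · exact .inr ⟨i, (zpow_natCast ω i).trans (neg_neg _).symm⟩

variable {H : Subgroup (𝓞 k)ˣ}

theorem eq_top_of_isPrimitiveRoot_mem (hω : IsPrimitiveRoot ω 3) (neg_one_mem : -1 ∈ H)
    (hmem : ω ∈ H) : H = ⊤ := by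
  refine (Subgroup.eq_top_iff' H).2 fun v => ?_
  obtain ⟨i, rfl | rfl⟩ := eq_pow_or_eq_neg_pow hω v
  · exact H.pow_mem hmem i
  · exact neg_one_mul (ω ^ i) ▸ H.mul_mem neg_one_mem (H.pow_mem hmem i)

theorem eq_one_or_eq_neg_one_of_mem (hω : IsPrimitiveRoot ω 3) (neg_one_mem : -1 ∈ H)
    (hmem : ω ∉ H) {v : (𝓞 k)ˣ} (hv : v ∈ H) : v = 1 ∨ v = -1 := by
  have pow_eq_one {i : ℕ} (hi : ω ^ i ∈ H) : ω ^ i = 1 := by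
    by_contra h
    have coprime : Nat.Coprime i 3 := ((Nat.prime_three.coprime_iff_not_dvd).2
      fun hdvd => h ((hω.pow_eq_one_iff_dvd i).2 hdvd)).symm
    obtain ⟨n, hn⟩ := exists_pow_eq_self_of_coprime (hω.eq_orderOf ▸ coprime)
    exact hmem (hn ▸ H.pow_mem hi n)
  obtain ⟨i, rfl | rfl⟩ := eq_pow_or_eq_neg_pow hω v
  · exact .inl (pow_eq_one hv)
  · have : ω ^ i ∈ H := by simpa using H.mul_mem neg_one_mem hv
    exact .inr (congrArg Neg.neg (pow_eq_one this))

theorem index_le_three (hω : IsPrimitiveRoot ω 3) (neg_one_mem : -1 ∈ H) : H.index ≤ 3 := by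
  have sup_eq : Subgroup.zpowers ω ⊔ H = ⊤ := eq_top_of_isPrimitiveRoot_mem hω
    (Subgroup.mem_sup_right neg_one_mem) (Subgroup.mem_sup_left (Subgroup.mem_zpowers ω))
  rw [← H.relIndex_top_right, ← sup_eq, Subgroup.relIndex_sup_right]
  exact Nat.le_of_dvd three_pos (by
    simpa only [Nat.card_zpowers, ← hω.eq_orderOf] using H.relIndex_dvd_card (Subgroup.zpowers ω))

end EisensteinUnits

section AmbiguousClassNumber

open NumberField

variable {k L : Type*} [Field k] [Field L] [Algebra k L]

variable (k) in
/-- The ideals `P₁`, `P₂` and `P₃` are fixed by `Gal(L/k)`, the first two multiply to `(a)`, and all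
primes of `L` that ramify totally over `k` are among them. For `L = k(a)` with `a ^ 3 = N` the
primes `P₁` and `P₂` divide `N`, while `P₃` is the prime above `3` if that ramifies and the unit
ideal otherwise. -/
structure IsRamifiedTriple (a : 𝓞 L) (P₁ P₂ P₃ : Ideal (𝓞 L)) : Prop where
  ne_zero : a ≠ 0
  mul_eq : P₁ * P₂ = Ideal.span {a}
  ne_bot₃ : P₃ ≠ ⊥
  smul_eq₁ (g : Gal(L/k)) : g • P₁ = P₁
  smul_eq₂ (g : Gal(L/k)) : g • P₂ = P₂
  smul_eq₃ (g : Gal(L/k)) : g • P₃ = P₃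
  eq_of_inertia_eq_top (P : Ideal (𝓞 L)) : P.IsPrime → P ≠ ⊥ → P.inertia Gal(L/k) = ⊤ →
    P = P₁ ∨ P = P₂ ∨ P = P₃

namespace IsRamifiedTriple

variable {a : 𝓞 L} {P₁ P₂ P₃ : Ideal (𝓞 L)}

theorem ne_bot₁ (h : IsRamifiedTriple k a P₁ P₂ P₃) : P₁ ≠ ⊥ :=
  left_ne_zero_of_mul (h.mul_eq ▸ span_singleton_ne_bot h.ne_zero)

theorem ne_bot₂ (h : IsRamifiedTriple k a P₁ P₂ P₃) : P₂ ≠ ⊥ :=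
  right_ne_zero_of_mul (h.mul_eq ▸ span_singleton_ne_bot h.ne_zero)

end IsRamifiedTriple

theorem span_ne_of_mul_smul_eq {a : 𝓞 L} {ω : (𝓞 k)ˣ} {σ : Gal(L/k)}
    (hσa : σ • a = algebraMap (𝓞 k) (𝓞 L) ω * a) {η : (𝓞 L)ˣ}
    (hη : ∀ v ∈ fixedSubgroup (galUnits σ), ∀ u, η * galUnits σ u ≠ v * u) {z : 𝓞 L}
    (hz : z ≠ 0) (hηz : η * σ • z = z) (r : ℕ) (E : 𝓞 k) :
    Ideal.span {z} ≠ Ideal.span {a ^ r * algebraMap (𝓞 k) (𝓞 L) E} := by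
  intro span_eq
  obtain ⟨e, rfl⟩ := Ideal.span_singleton_eq_span_singleton.1 span_eq.symm
  let v := Units.map (algebraMap (𝓞 k) (𝓞 L)).toMonoidHom (ω ^ r)⁻¹
  have hv : v ∈ fixedSubgroup (galUnits σ) := Units.ext (smul_algebraMap σ _)
  refine hη v hv e (Units.ext ?_)
  have smul_z : σ • (a ^ r * algebraMap (𝓞 k) (𝓞 L) E * e) =
      algebraMap (𝓞 k) (𝓞 L) ω ^ r * (a ^ r * algebraMap (𝓞 k) (𝓞 L) E) * σ • (e : 𝓞 L) := by
    rw [smul_mul', smul_mul', smul_pow', hσa, smul_algebraMap, mul_pow, mul_assoc (_ ^ r)]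
  have v_mul : (v : 𝓞 L) * algebraMap (𝓞 k) (𝓞 L) ω ^ r = 1 := by
    change algebraMap (𝓞 k) (𝓞 L) ((ω ^ r)⁻¹ : (𝓞 k)ˣ) * _ = 1
    rw [← map_pow, ← Units.val_pow_eq_pow_val, ← map_mul, Units.inv_mul, map_one]
  have eq_one : (η : 𝓞 L) * algebraMap (𝓞 k) (𝓞 L) ω ^ r * σ • (e : 𝓞 L) = e := by
    refine mul_left_cancel₀ (left_ne_zero_of_mul hz) ?_
    rw [smul_z] at hηz
    linear_combination hηz
  change (η : 𝓞 L) * σ • (e : 𝓞 L) = v * e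
  linear_combination (v : 𝓞 L) * eq_one - η * σ • (e : 𝓞 L) * v_mul

variable [NumberField k] [NumberField L]

theorem unitNorms_le_unitsInNorms : unitNorms k L ≤ unitsInNorms k L := by
  rintro _ ⟨u, rfl⟩
  exact ⟨Units.map (algebraMap (𝓞 L) L).toMonoidHom u, Units.ext (algebraMap_intNorm _).symm⟩

variable [IsGalois k L]

theorem intNorm_algebraMap (x : 𝓞 k) :
    Algebra.intNorm (𝓞 k) (𝓞 L) (algebraMap (𝓞 k) (𝓞 L) x) = x ^ Nat.card Gal(L/k) := by
  rw [IsGalois.card_aut_eq_finrank]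
  exact RingOfIntegers.ext ((algebraMap_intNorm _).trans
    ((Algebra.norm_algebraMap (x : k)).trans (map_pow (algebraMap (𝓞 k) k) x _).symm))

theorem neg_one_mem_unitNorms (hcard : Nat.card Gal(L/k) = 3) : -1 ∈ unitNorms k L := by
  refine ⟨-1, Units.ext ?_⟩
  have := intNorm_algebraMap (L := L) (-1 : 𝓞 k)
  rw [hcard] at this
  rw [map_neg, map_one, Odd.neg_one_pow (by decide)] at this
  exact this

section

variable [IsCyclotomicExtension {3} ℚ k] {ω : (𝓞 k)ˣ}

theorem exists_unit_norm_eq_one (hcard : Nat.card Gal(L/k) = 3)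
    (hrank : 0 < Units.rank L) (hω : IsPrimitiveRoot ω 3) (hmem : ω ∉ unitNorms k L)
    {σ : Gal(L/k)} (hσ : ∀ g, g ∈ Subgroup.zpowers σ) :
    ∃ η : (𝓞 L)ˣ, Algebra.intNorm (𝓞 k) (𝓞 L) η = 1 ∧
      ∀ v ∈ fixedSubgroup (galUnits σ), ∀ u, η * galUnits σ u ≠ v * u := by
  have := finite_units_of_isPrimitiveRoot hω
  obtain ⟨η, hη⟩ := exists_unit_forall_mul_galUnits_ne hcard hrank hσ
  let ν := Units.map (Algebra.intNorm (𝓞 k) (𝓞 L)) η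
  let ν' := Units.map (algebraMap (𝓞 k) (𝓞 L)).toMonoidHom ν
  have hν : ν = 1 ∨ ν = -1 :=
    eq_one_or_eq_neg_one_of_mem hω (neg_one_mem_unitNorms hcard) hmem ⟨η, rfl⟩
  have hν' : ν' ∈ fixedSubgroup (galUnits σ) := Units.ext (smul_algebraMap σ _)
  refine ⟨ν' * η, ?_, fun v hv u huv => hη (ν'⁻¹ * v) (mul_mem (inv_mem hν') hv) u ?_⟩
  · have norm_ν' : Algebra.intNorm (𝓞 k) (𝓞 L) ν' = ν ^ 3 := by
      rw [← hcard]
      exact intNorm_algebraMap _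
    rw [Units.val_mul, map_mul, norm_ν']
    change (ν : 𝓞 k) ^ 3 * ν = 1
    rcases hν with h | h <;> (rw [h]; norm_num)
  · rw [mul_assoc, ← huv, mul_assoc, inv_mul_cancel_left]

theorem relIndex_unitNorms_le_three (hcard : Nat.card Gal(L/k) = 3) (hω : IsPrimitiveRoot ω 3) :
    (unitNorms k L).relIndex (unitsInNorms k L) ≤ 3 := by
  have := finite_units_of_isPrimitiveRoot hω
  exact (Nat.le_of_dvd (Nat.pos_of_ne_zero Subgroup.FiniteIndex.index_ne_zero)
    (Subgroup.relIndex_dvd_index_of_normal _ _)).trans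
    (index_le_three hω (neg_one_mem_unitNorms hcard))

theorem unitsInNorms_le_unitNorms (hcard : Nat.card Gal(L/k) = 3) (hω : IsPrimitiveRoot ω 3)
    (hmem : ω ∉ unitsInNorms k L) : unitsInNorms k L ≤ unitNorms k L := fun v hv => by
  have neg_one_mem := neg_one_mem_unitNorms (k := k) (L := L) hcard
  rcases eq_one_or_eq_neg_one_of_mem hω (unitNorms_le_unitsInNorms neg_one_mem) hmem hv
    with rfl | rfl
  exacts [one_mem _, neg_one_mem]

end

variable [IsPrincipalIdealRing (𝓞 k)]

theorem exists_pow_card_eq_span {I : Ideal (𝓞 L)} (hinv : ∀ g : Gal(L/k), g • I = I) :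
    ∃ d, I ^ Nat.card Gal(L/k) = Ideal.span {algebraMap (𝓞 k) (𝓞 L) d} := by
  obtain ⟨d, hd⟩ := (IsPrincipalIdealRing.principal (Ideal.relNorm (𝓞 k) I)).principal
  refine ⟨d, ?_⟩
  have prod_eq := prod_smul_eq_map_relNorm (k := k) I
  rw [hd, ← Ideal.span, Ideal.map_span, Set.image_singleton] at prod_eq
  simpa only [hinv, Finset.prod_const, Finset.card_univ, ← Nat.card_eq_fintype_card] using prod_eq

theorem idealClass_pow_card_eq_one {I : Ideal (𝓞 L)} (hI : I ≠ ⊥)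
    (hinv : ∀ g : Gal(L/k), g • I = I) : idealClass I hI ^ Nat.card Gal(L/k) = 1 := by
  obtain ⟨d, hd⟩ := exists_pow_card_eq_span hinv
  rw [← idealClass_pow hI]
  exact (idealClass_eq_one_iff _).2 ⟨_, hd⟩

namespace IsRamifiedTriple

variable {a : 𝓞 L} {P₁ P₂ P₃ : Ideal (𝓞 L)}

theorem exists_eq_span_mul [Fact (Nat.card Gal(L/k)).Prime]
    (h : IsRamifiedTriple k a P₁ P₂ P₃) {I : Ideal (𝓞 L)} (hI : I ≠ ⊥)
    (hinv : ∀ g : Gal(L/k), g • I = I) :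
    ∃ d i j l, I = Ideal.span {algebraMap (𝓞 k) (𝓞 L) d} * (P₁ ^ i * P₂ ^ j) * P₃ ^ l := by
  refine induction_on_smul_eq (k := k) (motive := fun I => ∃ d i j l,
    I = Ideal.span {algebraMap (𝓞 k) (𝓞 L) d} * (P₁ ^ i * P₂ ^ j) * P₃ ^ l) ?_ ?_ ?_ hI hinv
  · intro I _
    obtain ⟨d, hd⟩ := (IsPrincipalIdealRing.principal I).principal
    refine ⟨d, 0, 0, 0, ?_⟩
    rw [hd, ← Ideal.span, Ideal.map_span, Set.image_singleton]
    simp only [pow_zero, mul_one]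
  · intro P P_prime P_ne inertia
    rcases h.eq_of_inertia_eq_top P P_prime P_ne inertia with rfl | rfl | rfl
    exacts [⟨1, 1, 0, 0, by simp⟩, ⟨1, 0, 1, 0, by simp⟩, ⟨1, 0, 0, 1, by simp⟩]
  · rintro _ _ ⟨d, i, j, l, rfl⟩ ⟨d', i', j', l', rfl⟩
    refine ⟨d * d', i + i', j + j', l + l', ?_⟩
    rw [map_mul, ← Ideal.span_singleton_mul_span_singleton]
    ring

theorem idealClass_eq (hcard : Nat.card Gal(L/k) = 3) (h : IsRamifiedTriple k a P₁ P₂ P₃)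
    {I : Ideal (𝓞 L)} (hI : I ≠ ⊥) {x : 𝓞 L} {i j l : ℕ}
    (I_eq : I = Ideal.span {x} * (P₁ ^ i * P₂ ^ j) * P₃ ^ l) :
    idealClass I hI =
      idealClass P₁ h.ne_bot₁ ^ (i + 2 * j) * idealClass P₃ h.ne_bot₃ ^ l := by
  have x_ne : x ≠ 0 := by
    rintro rfl
    exact hI (I_eq.trans (by simp))
  have pow_three := idealClass_pow_card_eq_one h.ne_bot₁ h.smul_eq₁
  rw [hcard] at pow_three
  have class₂ : idealClass P₂ h.ne_bot₂ = idealClass P₁ h.ne_bot₁ ^ 2 := by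
    have mul_eq_one : idealClass P₁ h.ne_bot₁ * idealClass P₂ h.ne_bot₂ = 1 := by
      rw [← idealClass_mul]
      exact (idealClass_eq_one_iff _).2 ⟨a, h.mul_eq⟩
    rw [← mul_right_inj, mul_eq_one, ← pow_succ', pow_three]
  have pow_ne₁ := pow_ne_zero i h.ne_bot₁
  have pow_ne₂ := pow_ne_zero j h.ne_bot₂
  have mul_ne := mul_ne_zero pow_ne₁ pow_ne₂
  rw [idealClass_congr I_eq hI (I_eq ▸ hI),
    idealClass_mul (mul_ne_zero (span_singleton_ne_bot x_ne) mul_ne)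
      (pow_ne_zero l h.ne_bot₃), idealClass_mul (span_singleton_ne_bot x_ne) mul_ne,
    idealClass_mul pow_ne₁ pow_ne₂, idealClass_pow h.ne_bot₁, idealClass_pow h.ne_bot₂,
    idealClass_pow h.ne_bot₃, idealClass_span_singleton x_ne, one_mul, class₂, ← pow_mul,
    ← pow_add]

theorem stronglyAmbiguousClasses_le_closure (hcard : Nat.card Gal(L/k) = 3) {σ : Gal(L/k)}
    (hσ : ∀ g, g ∈ Subgroup.zpowers σ) (h : IsRamifiedTriple k a P₁ P₂ P₃) :
    stronglyAmbiguousClasses σ ≤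
      Subgroup.closure {idealClass P₁ h.ne_bot₁, idealClass P₃ h.ne_bot₃} := by
  have := Fact.mk (hcard ▸ Nat.prime_three : (Nat.card Gal(L/k)).Prime)
  rw [stronglyAmbiguousClasses, Subgroup.closure_le]
  rintro _ ⟨I, hI, hinv, rfl⟩
  obtain ⟨d, i, j, l, I_eq⟩ := h.exists_eq_span_mul hI (smul_eq_of_forall_mem_zpowers hσ hinv)
  rw [h.idealClass_eq hcard hI I_eq]
  exact Subgroup.mul_mem _ (Subgroup.pow_mem _ (Subgroup.subset_closure (.inl rfl)) _)
    (Subgroup.pow_mem _ (Subgroup.subset_closure (.inr rfl)) _)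

theorem exists_pow_mul_pow_eq_span (hcard : Nat.card Gal(L/k) = 3)
    (h : IsRamifiedTriple k a P₁ P₂ P₃) {i j : ℕ} (hij : 3 ∣ i + 2 * j) :
    ∃ r E, P₁ ^ i * P₂ ^ j = Ideal.span {a ^ r * algebraMap (𝓞 k) (𝓞 L) E} := by
  obtain ⟨d₁, hd₁⟩ := exists_pow_card_eq_span h.smul_eq₁
  obtain ⟨d₂, hd₂⟩ := exists_pow_card_eq_span h.smul_eq₂
  rw [hcard] at hd₁ hd₂
  simp only [← Ideal.span_singleton_mul_span_singleton, ← Ideal.span_singleton_pow,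
    ← h.mul_eq]
  rcases le_total i j with hle | hle
  · obtain ⟨s, hs⟩ : 3 ∣ j - i := by omega
    refine ⟨i, d₂ ^ s, ?_⟩
    rw [map_pow, ← Ideal.span_singleton_pow, ← hd₂, mul_pow, mul_assoc, ← pow_mul, ← pow_add,
      ← hs, Nat.add_sub_cancel' hle]
  · obtain ⟨s, hs⟩ : 3 ∣ i - j := by omega
    refine ⟨j, d₁ ^ s, ?_⟩
    rw [map_pow, ← Ideal.span_singleton_pow, ← hd₁, mul_pow, mul_right_comm, ← pow_mul,
      ← pow_add, ← hs, Nat.add_sub_cancel' hle]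

theorem exists_pow_mul_pow_eq_one (hcard : Nat.card Gal(L/k) = 3)
    (h : IsRamifiedTriple k a P₁ P₂ P₃) {ω : (𝓞 k)ˣ} {σ : Gal(L/k)}
    (hσ : ∀ g, g ∈ Subgroup.zpowers σ) (hσa : σ • a = algebraMap (𝓞 k) (𝓞 L) ω * a)
    {η : (𝓞 L)ˣ} (norm_η : Algebra.intNorm (𝓞 k) (𝓞 L) η = 1)
    (hη : ∀ v ∈ fixedSubgroup (galUnits σ), ∀ u, η * galUnits σ u ≠ v * u) :
    ∃ m n, idealClass P₁ h.ne_bot₁ ^ m * idealClass P₃ h.ne_bot₃ ^ n = 1 ∧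
      ¬(3 ∣ m ∧ ∃ d, P₃ ^ n = Ideal.span {algebraMap (𝓞 k) (𝓞 L) d}) := by
  have := Fact.mk (hcard ▸ Nat.prime_three : (Nat.card Gal(L/k)).Prime)
  obtain ⟨z, z_ne, hz⟩ := exists_mul_smul_eq_mul hσ one_ne_zero (norm_η.trans (map_one _).symm)
  rw [one_mul] at hz
  have hinv : σ • Ideal.span {z} = Ideal.span {z} := by
    rw [smul_span_singleton]
    conv_rhs => rw [← hz, Ideal.span_singleton_mul_left_unit η.isUnit]
  obtain ⟨d, i, j, l, span_eq⟩ := h.exists_eq_span_mul (span_singleton_ne_bot z_ne)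
    (smul_eq_of_forall_mem_zpowers hσ hinv)
  refine ⟨i + 2 * j, l, ?_, ?_⟩
  · rw [← h.idealClass_eq hcard (span_singleton_ne_bot z_ne) span_eq]
    exact idealClass_span_singleton z_ne
  · rintro ⟨hij, d', hd'⟩
    obtain ⟨r, E, hrE⟩ := h.exists_pow_mul_pow_eq_span hcard hij
    refine span_ne_of_mul_smul_eq hσa hη z_ne hz r (d * E * d') ?_
    rw [span_eq, hrE, hd', Ideal.span_singleton_mul_span_singleton,
      Ideal.span_singleton_mul_span_singleton, map_mul, map_mul]
    ring_nf

variable [IsCyclotomicExtension {3} ℚ k] {ω : (𝓞 k)ˣ}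

theorem card_stronglyAmbiguousClasses_le_three (hcard : Nat.card Gal(L/k) = 3)
    (hrank : 0 < Units.rank L) (h : IsRamifiedTriple k a P₁ P₂ P₃) (hω : IsPrimitiveRoot ω 3)
    (hP₃ : P₃ = ⊤ ∨ ω ∉ unitNorms k L) {σ : Gal(L/k)} (hσ : ∀ g, g ∈ Subgroup.zpowers σ)
    (hσa : σ • a = algebraMap (𝓞 k) (𝓞 L) ω * a) :
    Nat.card (stronglyAmbiguousClasses σ) ≤ 3 := by
  have pow₁ := idealClass_pow_card_eq_one h.ne_bot₁ h.smul_eq₁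
  have pow₃ := idealClass_pow_card_eq_one h.ne_bot₃ h.smul_eq₃
  rw [hcard] at pow₁ pow₃
  refine (Subgroup.card_le_of_le (h.stronglyAmbiguousClasses_le_closure hcard hσ)).trans
    (Nat.le_of_dvd three_pos ?_)
  rcases hP₃ with rfl | hmem
  · exact card_closure_pair_dvd (m := 0) (n := 1) Nat.prime_three pow₁ pow₃
      (by rw [pow_zero, pow_one, one_mul, idealClass_top]) (by decide)
  · obtain ⟨η, norm_η, hη⟩ := exists_unit_norm_eq_one hcard hrank hω hmem hσ
    obtain ⟨m, n, rel, hmn⟩ := h.exists_pow_mul_pow_eq_one hcard hσ hσa norm_η hη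
    refine card_closure_pair_dvd Nat.prime_three pow₁ pow₃ rel fun ⟨hm, l, hl⟩ => hmn ⟨hm, ?_⟩
    obtain ⟨d, hd⟩ := exists_pow_card_eq_span h.smul_eq₃
    exact ⟨d ^ l, by rw [hl, pow_mul, ← hcard, hd, Ideal.span_singleton_pow, map_pow]⟩

theorem stronglyAmbiguousClasses_eq_bot (hcard : Nat.card Gal(L/k) = 3)
    (hrank : 0 < Units.rank L) (h : IsRamifiedTriple k a P₁ P₂ ⊤) (hω : IsPrimitiveRoot ω 3)
    (hmem : ω ∉ unitNorms k L) {σ : Gal(L/k)} (hσ : ∀ g, g ∈ Subgroup.zpowers σ)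
    (hσa : σ • a = algebraMap (𝓞 k) (𝓞 L) ω * a) : stronglyAmbiguousClasses σ = ⊥ := by
  have pow₁ := idealClass_pow_card_eq_one h.ne_bot₁ h.smul_eq₁
  rw [hcard] at pow₁
  obtain ⟨η, norm_η, hη⟩ := exists_unit_norm_eq_one hcard hrank hω hmem hσ
  obtain ⟨m, n, rel, hmn⟩ := h.exists_pow_mul_pow_eq_one hcard hσ hσa norm_η hη
  rw [idealClass_top, one_pow, mul_one] at rel
  have not_dvd : ¬3 ∣ m := fun hm => hmn ⟨hm, 1, by simp⟩
  have class_eq_one : idealClass P₁ h.ne_bot₁ = 1 := by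
    rw [← orderOf_eq_one_iff]
    exact Nat.eq_one_of_dvd_coprimes (Nat.prime_three.coprime_iff_not_dvd.2 not_dvd)
      (orderOf_dvd_of_pow_eq_one pow₁) (orderOf_dvd_of_pow_eq_one rel)
  refine le_bot_iff.1 ((h.stronglyAmbiguousClasses_le_closure hcard hσ).trans ?_)
  rw [class_eq_one, idealClass_top, Set.pair_eq_singleton, Subgroup.closure_singleton_one]

theorem card_ambiguousClasses_le_three (hcard : Nat.card Gal(L/k) = 3) (hrank : 0 < Units.rank L)
    (h : IsRamifiedTriple k a P₁ P₂ P₃) (hω : IsPrimitiveRoot ω 3)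
    (hP₃ : P₃ = ⊤ ∨ ω ∉ unitsInNorms k L) {σ : Gal(L/k)} (hσ : ∀ g, g ∈ Subgroup.zpowers σ)
    (hσa : σ • a = algebraMap (𝓞 k) (𝓞 L) ω * a) :
    Nat.card (ambiguousClasses σ) ≤ 3 := by
  have strong_le : Nat.card (stronglyAmbiguousClasses σ) ≤ 3 :=
    h.card_stronglyAmbiguousClasses_le_three hcard hrank hω
      (hP₃.imp_right fun hmem hω => hmem (unitNorms_le_unitsInNorms hω)) hσ hσa
  have := finite_units_of_isPrimitiveRoot hω
  refine (card_ambiguousClasses_le hσ (Nat.card_pos (α := _ ⧸ _)).ne').trans ?_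
  by_cases units_le : unitsInNorms k L ≤ unitNorms k L
  · rwa [Subgroup.relIndex_eq_one.2 units_le, mul_one]
  · obtain rfl : P₃ = ⊤ :=
      hP₃.resolve_right fun hmem => units_le (unitsInNorms_le_unitNorms hcard hω hmem)
    have hmem : ω ∉ unitNorms k L := fun hmem => units_le
      (eq_top_of_isPrimitiveRoot_mem hω (neg_one_mem_unitNorms hcard) hmem ▸ le_top)
    rw [h.stronglyAmbiguousClasses_eq_bot hcard hrank hω hmem hσ hσa, Subgroup.card_bot, one_mul]
    exact relIndex_unitNorms_le_three hcard hω

end IsRamifiedTriple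

end AmbiguousClassNumber

section RamificationInPureCubicFields

open NumberField

theorem eq_or_eq_of_mul_le {R : Type*} [CommRing R] [IsDedekindDomain R] {I J P : Ideal R}
    [hI : I.IsPrime] [hJ : J.IsPrime] [hP : P.IsPrime] (hIJ : I * J ≠ ⊥) (h : I * J ≤ P) :
    P = I ∨ P = J := by
  have eq_of_le {Q : Ideal R} (hQ : Q.IsPrime) (Q_ne : Q ≠ ⊥) (le : Q ≤ P) : P = Q :=
    ((hQ.isMaximal Q_ne).eq_of_le hP.ne_top le).symm
  exact (hP.mul_le.1 h).imp (eq_of_le hI (left_ne_zero_of_mul hIJ))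
    (eq_of_le hJ (right_ne_zero_of_mul hIJ))

variable {k L : Type*} [Field k] [Field L] [Algebra k L]

theorem mem_or_mem_of_inertia_eq_top {ω : (𝓞 k)ˣ} {a : 𝓞 L} {σ : Gal(L/k)}
    (hσa : σ • a = algebraMap (𝓞 k) (𝓞 L) ω * a) {P : Ideal (𝓞 L)} [hP : P.IsPrime]
    (inertia : P.inertia Gal(L/k) = ⊤) :
    a ∈ P ∨ algebraMap (𝓞 k) (𝓞 L) (ω - 1) ∈ P := by
  have sub_mem : σ • a - a ∈ P := AddSubgroup.mem_inertia.1 (inertia ▸ Subgroup.mem_top σ) a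
  have sub_eq : σ • a - a = a * algebraMap (𝓞 k) (𝓞 L) (ω - 1) := by
    rw [hσa, map_sub, map_one]
    ring
  exact hP.mem_or_mem (sub_eq ▸ sub_mem)

theorem smul_cubeRootPrime_eq_self {ω : (𝓞 k)ˣ} {a : 𝓞 L} {σ : Gal(L/k)}
    (hσ : ∀ g, g ∈ Subgroup.zpowers σ) (hσa : σ • a = algebraMap (𝓞 k) (𝓞 L) ω * a)
    (x : 𝓞 k) (c : ℤ) (g : Gal(L/k)) :
    g • cubeRootPrime a (algebraMap (𝓞 k) (𝓞 L) x) c =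
      cubeRootPrime a (algebraMap (𝓞 k) (𝓞 L) x) c := by
  refine smul_eq_of_forall_mem_zpowers hσ ?_ g
  rw [smul_cubeRootPrime, hσa, smul_algebraMap]
  exact cubeRootPrime_units_mul (Units.map (algebraMap (𝓞 k) (𝓞 L)).toMonoidHom ω) a _ c

variable [NumberField k] [NumberField L] [IsGalois k L]

/- If `ω` were a norm then `N ≡ 1 (mod 9)`, so that `y = (a - 1) / (ω - 1)` would be integral;
but `σ y - y = a` is not in `Q`. -/
theorem notMem_unitsInNorms_of_notMem (hcard : Nat.card Gal(L/k) = 3) {ω : (𝓞 k)ˣ}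
    (hω : IsPrimitiveRoot ω 3) {N : ℕ} (hN : N.Prime) (hNmod : N % 3 = 1) {a : 𝓞 L}
    (ha : a ^ 3 = N) {σ : Gal(L/k)} (hσa : σ • a = algebraMap (𝓞 k) (𝓞 L) ω * a)
    {P Q : Ideal (𝓞 L)} [hP : P.IsPrime] (norm_P : Ideal.absNorm P = N)
    (inertia_P : P.inertia Gal(L/k) = ⊤) (inertia_Q : Q.inertia Gal(L/k) = ⊤) (haQ : a ∉ Q) :
    ω ∉ unitsInNorms k L := by
  intro hmem
  have three_notMem : ((3 : ℕ) : 𝓞 L) ∉ P := fun three_mem => by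
    have coprime : IsCoprime ((3 : ℕ) : 𝓞 L) (N : 𝓞 L) :=
      Nat.Coprime.cast (Nat.prime_three.coprime_iff_not_dvd.2 (by omega))
    exact hP.one_notMem (by
      obtain ⟨u, v, huv⟩ := coprime
      rw [← huv]
      exact P.add_mem (P.mul_mem_left _ three_mem)
        (P.mul_mem_left _ (norm_P ▸ Ideal.absNorm_mem P)))
  have P_ne : P ≠ ⊥ := by
    rintro rfl
    exact hN.ne_zero (norm_P.symm.trans Ideal.absNorm_bot)
  obtain ⟨m, hm⟩ := sq_dvd_absNorm_sub_one hcard hω hmem P_ne inertia_P three_notMem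
  have cube_eq : a ^ 3 = 9 * m + 1 := by
    rw [norm_P] at hm
    rw [ha, ← Nat.sub_add_cancel hN.one_le, hm]
    push_cast
    norm_num
  have hw := isPrimitiveRoot_map (algebraMap (𝓞 k) (𝓞 L)) (IsPrimitiveRoot.coe_units_iff.2 hω)
  obtain ⟨y, hy⟩ := sub_one_dvd_sub_one (OfNat.ofNat_ne_zero 3)
    (sq_add_self_add_one_of_isPrimitiveRoot hw) cube_eq
  have smul_y := congrArg (σ • ·) hy
  simp only [smul_sub, smul_mul', smul_one, smul_algebraMap, hσa] at smul_y
  have sub_eq : σ • y - y = a :=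
    mul_left_cancel₀ (sub_ne_zero.2 (hw.ne_one (by norm_num))) (by linear_combination hy - smul_y)
  exact haQ (sub_eq ▸ AddSubgroup.mem_inertia.1 (inertia_Q ▸ Subgroup.mem_top σ) y)

theorem exists_ideal_of_ramified_not_dvd [IsCyclotomicExtension {3} ℚ k]
    (hcard : Nat.card Gal(L/k) = 3) {ω : (𝓞 k)ˣ} (hω : IsPrimitiveRoot ω 3) {N : ℕ} (hN : N.Prime)
    (hNmod : N % 3 = 1) {a : 𝓞 L} (ha : a ^ 3 = N) {σ : Gal(L/k)}
    (hσa : σ • a = algebraMap (𝓞 k) (𝓞 L) ω * a) {P : Ideal (𝓞 L)} [P.IsPrime]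
    (norm_P : Ideal.absNorm P = N) (inertia_P : P.inertia Gal(L/k) = ⊤) :
    ∃ Q : Ideal (𝓞 L), Q ≠ ⊥ ∧ (∀ g : Gal(L/k), g • Q = Q) ∧ (Q = ⊤ ∨ ω ∉ unitsInNorms k L) ∧
      ∀ I : Ideal (𝓞 L), I.IsPrime → I ≠ ⊥ → I.inertia Gal(L/k) = ⊤ → a ∈ I ∨ I = Q := by
  by_cases h : ∃ Q : Ideal (𝓞 L), Q.IsPrime ∧ Q ≠ ⊥ ∧ Q.inertia Gal(L/k) = ⊤ ∧ a ∉ Q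
  · obtain ⟨Q, hQ, Q_ne, inertia_Q, haQ⟩ := h
    refine ⟨Q, Q_ne, fun g => ?_, .inr ?_, fun I hI _ inertia_I => ?_⟩
    · exact Ideal.inertia_le_stabilizer (M := Gal(L/k)) Q (inertia_Q ▸ Subgroup.mem_top g)
    · exact notMem_unitsInNorms_of_notMem hcard hω hN hNmod ha hσa norm_P inertia_P inertia_Q haQ
    · exact (mem_or_mem_of_inertia_eq_top hσa inertia_I).imp_right fun mem_I =>
        eq_of_inertia_eq_top inertia_I (prime_sub_one_of_isPrimitiveRoot hω) mem_I
          ((mem_or_mem_of_inertia_eq_top hσa inertia_Q).resolve_left haQ)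
  · refine ⟨⊤, top_ne_bot, smul_ideal_top, .inl rfl, fun I hI I_ne inertia_I => .inl ?_⟩
    by_contra haI
    exact h ⟨I, hI, I_ne, inertia_I, haI⟩

theorem exists_isRamifiedTriple [IsCyclotomicExtension {3} ℚ k] {F : Type*} [Field F]
    [Algebra F L] (hdeg : Module.finrank ℚ L = 6) (hcard : Nat.card Gal(L/k) = 3) {ω : (𝓞 k)ˣ}
    (hω : IsPrimitiveRoot ω 3) {N : ℕ} (hN : N.Prime) (hNmod : N % 3 = 1) {a : 𝓞 L}
    (ha : a ^ 3 = N) {σ : Gal(L/k)} (hσ : ∀ g, g ∈ Subgroup.zpowers σ)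
    (hσa : σ • a = algebraMap (𝓞 k) (𝓞 L) ω * a) {τ : Gal(L/F)} (hτa : τ • a = a)
    (hτω : τ • algebraMap (𝓞 k) (𝓞 L) ω = algebraMap (𝓞 k) (𝓞 L) ω ^ 2) :
    ∃ P₁ P₂ P₃, IsRamifiedTriple k a P₁ P₂ P₃ ∧ (P₃ = ⊤ ∨ ω ∉ unitsInNorms k L) := by
  obtain ⟨c, hc⟩ := exists_dvd_sq_add_self_add_one hN hNmod
  have hN3 : IsCoprime (3 : ℤ) N :=
    Nat.Coprime.isCoprime (Nat.prime_three.coprime_iff_not_dvd.2 (by omega : ¬3 ∣ N))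
  have hw := sq_add_self_add_one_of_isPrimitiveRoot
    (isPrimitiveRoot_map (algebraMap (𝓞 k) (𝓞 L)) (IsPrimitiveRoot.coe_units_iff.2 hω))
  have inv_P₁ := smul_cubeRootPrime_eq_self hσ hσa ω c
  have inv_P₂ := smul_cubeRootPrime_eq_self hσ hσa (ω ^ 2) c
  rw [map_pow] at inv_P₂
  have norm_P₁ := absNorm_cubeRootPrime hdeg hN3 hc ha hw hτa hτω
  have mul_eq := cubeRootPrime_mul_cubeRootPrime hN3 hc (by exact_mod_cast ha) hw
  have smul_P₁ := smul_cubeRootPrime τ a (algebraMap (𝓞 k) (𝓞 L) ω) c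
  rw [hτa, hτω] at smul_P₁
  have norm_P₂ := (absNorm_smul τ _).trans norm_P₁
  rw [smul_P₁] at norm_P₂
  generalize cubeRootPrime a (algebraMap (𝓞 k) (𝓞 L) ω) c = P₁ at *
  generalize cubeRootPrime a (algebraMap (𝓞 k) (𝓞 L) ω ^ 2) c = P₂ at *
  have prime_P₁ : P₁.IsPrime := Ideal.isPrime_of_irreducible_absNorm (norm_P₁.symm ▸ hN)
  have prime_P₂ : P₂.IsPrime := Ideal.isPrime_of_irreducible_absNorm (norm_P₂.symm ▸ hN)
  have a_ne : a ≠ 0 := by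
    rintro rfl
    exact hN.ne_zero (by exact_mod_cast ha.symm.trans (zero_pow three_ne_zero))
  obtain ⟨P₃, P₃_ne, inv_P₃, hP₃, mem_or_eq⟩ := exists_ideal_of_ramified_not_dvd hcard hω hN hNmod
    ha hσa norm_P₁ (inertia_eq_top_of_absNorm_prime (norm_P₁.symm ▸ hN) inv_P₁)
  refine ⟨P₁, P₂, P₃, ⟨a_ne, mul_eq, P₃_ne, inv_P₁, inv_P₂, inv_P₃, fun P hP P_ne inertia =>
    or_assoc.1 ((mem_or_eq P hP P_ne inertia).imp_left fun mem_P => ?_)⟩, hP₃⟩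
  exact eq_or_eq_of_mul_le (mul_eq ▸ span_singleton_ne_bot a_ne)
    (mul_eq ▸ (Ideal.span_singleton_le_iff_mem _).2 mem_P)

end RamificationInPureCubicFields

section PureFields

open NumberField Polynomial IntermediateField

theorem irreducible_X_pow_sub_C_natCast {F : Type*} [Field F] [NumberField F] {p N : ℕ}
    (hp : p.Prime) (hN : N.Prime) (hF : ¬p ∣ Module.finrank ℚ F) :
    Irreducible (X ^ p - C (N : F)) := by
  refine X_pow_sub_C_irreducible_of_prime hp fun b hb => hF ?_
  have := Fact.mk hN
  have norm_pow : Algebra.norm ℚ b ^ p = (N : ℚ) ^ Module.finrank ℚ F := by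
    rw [← map_pow, hb, ← map_natCast (algebraMap ℚ F), Algebra.norm_algebraMap]
  have valuation := congrArg (padicValRat N) norm_pow
  rw [padicValRat.pow, padicValRat.pow, padicValRat.self hN.one_lt, mul_one] at valuation
  exact Int.natCast_dvd_natCast.1 ⟨_, valuation.symm⟩

variable {F E : Type*} [Field F] [NumberField F] [Field E] [Algebra F E] {p N : ℕ}

theorem minpoly_eq_X_pow_sub_C (hp : p.Prime) (hN : N.Prime) (hF : ¬p ∣ Module.finrank ℚ F)
    {α : E} (hα : α ^ p = N) : minpoly F α = X ^ p - C (N : F) :=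
  (minpoly.eq_of_irreducible_of_monic (irreducible_X_pow_sub_C_natCast hp hN hF)
    (by simp only [map_sub, map_pow, aeval_X, map_natCast, hα, sub_self])
    (monic_X_pow_sub_C _ hp.ne_zero)).symm

theorem adjoin_eq_top_of_pow_eq_natCast (hp : p.Prime) (hN : N.Prime)
    (hF : ¬p ∣ Module.finrank ℚ F) (hdeg : Module.finrank F E = p) {α : E} (hα : α ^ p = N) :
    F⟮α⟯ = ⊤ := by
  have := Module.finite_of_finrank_pos (hdeg ▸ hp.pos)
  rw [Field.primitive_element_iff_minpoly_natDegree_eq, minpoly_eq_X_pow_sub_C hp hN hF hα,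
    natDegree_X_pow_sub_C, hdeg]

theorem isGalois_of_pow_eq_natCast (hp : p.Prime) (hN : N.Prime)
    (hF : ¬p ∣ Module.finrank ℚ F) (hdeg : Module.finrank F E = p) {ζ : F}
    (hζ : IsPrimitiveRoot ζ p) {α : E} (hα : α ^ p = N) : IsGalois F E := by
  have := Module.finite_of_finrank_pos (hdeg ▸ hp.pos)
  have := isSplittingField_X_pow_sub_C_of_root_adjoin_eq_top (a := (N : F))
    ⟨ζ, (mem_primitiveRoots (hdeg ▸ hp.pos)).2 (hdeg ▸ hζ)⟩ (by rw [hdeg, hα, map_natCast])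
    (adjoin_eq_top_of_pow_eq_natCast hp hN hF hdeg hα)
  rw [hdeg] at this
  exact isGalois_of_isSplittingField_X_pow_sub_C ⟨ζ, (mem_primitiveRoots hp.pos).2 hζ⟩
    (irreducible_X_pow_sub_C_natCast hp hN hF) E

theorem exists_algEquiv_apply_eq_mul (hp : p.Prime) (hN : N.Prime)
    (hF : ¬p ∣ Module.finrank ℚ F) [Normal F E] {ζ : F} (hζ : ζ ^ p = 1) {α : E}
    (hα : α ^ p = N) : ∃ σ : Gal(E/F), σ α = algebraMap F E ζ * α := by
  refine isConjRoot_iff_exists_algEquiv.1 ?_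
  rw [IsConjRoot, minpoly_eq_X_pow_sub_C hp hN hF hα, minpoly_eq_X_pow_sub_C hp hN hF
    (by rw [mul_pow, ← map_pow, hζ, map_one, one_mul, hα])]

theorem trace_eq_zero_of_pow_eq_natCast (hp : p.Prime) (hN : N.Prime)
    (hF : ¬p ∣ Module.finrank ℚ F) [FiniteDimensional F E] {α : E} (hα : α ^ p = N) :
    Algebra.trace F E α = 0 := by
  rw [trace_eq_finrank_mul_minpoly_nextCoeff, minpoly_eq_X_pow_sub_C hp hN hF hα,
    nextCoeff_of_natDegree_pos (by rw [natDegree_X_pow_sub_C]; exact hp.pos),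
    natDegree_X_pow_sub_C, coeff_sub, coeff_X_pow, coeff_C,
    if_neg (by have := hp.two_le; omega), if_neg (by have := hp.two_le; omega), sub_zero,
    neg_zero, mul_zero]

theorem algHom_eq_of_apply_eq {F E A : Type*} [Field F] [Field E] [Semiring A] [Algebra F E]
    [Algebra.IsAlgebraic F E] [Algebra F A] {α : E} (hα : F⟮α⟯ = ⊤) {f g : E →ₐ[F] A}
    (h : f α = g α) : f = g := by
  refine AlgHom.ext_of_adjoin_eq_top (s := {α}) ?_ (Set.eqOn_singleton.2 h)
  rw [← adjoin_simple_toSubalgebra_of_isAlgebraic (Algebra.IsAlgebraic.isAlgebraic α), hα,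
    top_toSubalgebra]

end PureFields

section TorsionBound

open NumberField Polynomial

theorem irreducible_cyclotomic_three_of_odd_finrank {K : Type*} [Field K] [NumberField K]
    (hK : Odd (Module.finrank ℚ K)) : Irreducible (cyclotomic 3 K) := by
  have totient_three : Nat.totient 3 = 2 := Nat.totient_prime Nat.prime_three
  refine irreducible_of_degree_le_three_of_not_isRoot ?_ fun z hz => ?_
  · rw [natDegree_cyclotomic, totient_three]
    decide
  · have z_primitive := isRoot_cyclotomic_iff.1 hz
    have two_dvd := minpoly.degree_dvd (K := ℚ) (Algebra.IsIntegral.isIntegral z)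
    rw [← cyclotomic_eq_minpoly_rat z_primitive three_pos, natDegree_cyclotomic,
      totient_three] at two_dvd
    exact Nat.not_even_iff_odd.2 hK (even_iff_two_dvd.2 two_dvd)

theorem exists_algEquiv_apply_eq_pow {K L : Type*} [Field K] [Field L] [Algebra K L] [Normal K L]
    {n : ℕ} [NeZero (n : K)] (hirr : Irreducible (cyclotomic n K)) {ζ : L}
    (hζ : IsPrimitiveRoot ζ n) {m : ℕ} (hm : m.Coprime n) : ∃ τ : Gal(L/K), τ ζ = ζ ^ m := by
  refine isConjRoot_iff_exists_algEquiv.1 ?_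
  rw [IsConjRoot, ← hζ.minpoly_eq_cyclotomic_of_irreducible hirr,
    ← (hζ.pow_of_coprime m hm).minpoly_eq_cyclotomic_of_irreducible hirr]

theorem rank_units_pos {K : Type*} [Field K] [NumberField K] (hK : 2 < Module.finrank ℚ K) :
    0 < Units.rank K := by
  have card_eq := InfinitePlace.card_add_two_mul_card_eq_rank K
  have places_eq := InfinitePlace.card_eq_nrRealPlaces_add_nrComplexPlaces K
  rw [Units.rank]
  omega

variable {k K L : Type*} [Field k] [Field K] [NumberField K] [Field L]
  [NumberField L] [Algebra k L] [Algebra K L]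

theorem eq_one_of_classHom_eq_one {n : ℕ} (hn : n.Coprime (Module.finrank K L))
    {c : ClassGroup (𝓞 K)} (hc : c ^ n = 1)
    (h : classHom (algebraMap (𝓞 K) (𝓞 L)) (FaithfulSMul.algebraMap_injective _ _) c = 1) :
    c = 1 := by
  suffices c ^ Module.finrank K L = 1 by
    exact (pow_eq_one_iff_of_coprime hn).1 ⟨hc, this⟩
  obtain ⟨I, hI, rfl⟩ := exists_idealClass_eq c
  rw [classHom_idealClass, idealClass_eq_one_iff] at h
  obtain ⟨x, hx⟩ := h
  have norm_eq := Ideal.relNorm_algebraMap (𝓞 L) I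
  rw [hx, Ideal.relNorm_singleton, ← IsFractionRing.finrank_eq (𝓞 K) K (𝓞 L) L] at norm_eq
  rw [← idealClass_pow, idealClass_eq_one_iff]
  exact ⟨_, norm_eq.symm⟩

theorem galClass_classHom_algebraMap (g : Gal(L/K)) (c : ClassGroup (𝓞 K)) :
    galClass g (classHom (algebraMap (𝓞 K) (𝓞 L)) (FaithfulSMul.algebraMap_injective _ _) c) =
      classHom (algebraMap (𝓞 K) (𝓞 L)) (FaithfulSMul.algebraMap_injective _ _) c := by
  obtain ⟨I, hI, rfl⟩ := exists_idealClass_eq c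
  rw [classHom_idealClass, galClass_idealClass]
  exact idealClass_congr (smul_map_algebraMap g I) _ _

theorem smul_smul_algebraMap_eq (hK : Module.finrank ℚ K = 3) {N : ℕ} (hN : N.Prime) {a : 𝓞 K}
    (ha : a ^ 3 = N) {ω : 𝓞 k} {σ : Gal(L/k)}
    (hσa : σ • algebraMap (𝓞 K) (𝓞 L) a =
      algebraMap (𝓞 k) (𝓞 L) ω * algebraMap (𝓞 K) (𝓞 L) a) {τ : Gal(L/K)}
    (hτω : τ • algebraMap (𝓞 k) (𝓞 L) ω = algebraMap (𝓞 k) (𝓞 L) ω ^ 2) (x : 𝓞 K) :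
    τ • σ • algebraMap (𝓞 K) (𝓞 L) x = σ • σ • algebraMap (𝓞 K) (𝓞 L) x := by
  let ι := (algebraMap K L).toRatAlgHom
  let σ' := (σ : L →+* L).toRatAlgHom
  let τ' := (τ : L →+* L).toRatAlgHom
  have a_cube : (a : K) ^ 3 = N := by exact_mod_cast congrArg (algebraMap (𝓞 K) K) ha
  have smul_a : τ • σ • algebraMap (𝓞 K) (𝓞 L) a = σ • σ • algebraMap (𝓞 K) (𝓞 L) a := by
    rw [hσa, smul_mul', smul_mul', hτω, hσa, smul_algebraMap, smul_algebraMap]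
    ring
  have hom_eq : τ'.comp (σ'.comp ι) = σ'.comp (σ'.comp ι) :=
    algHom_eq_of_apply_eq (adjoin_eq_top_of_pow_eq_natCast Nat.prime_three hN
      (by rw [Module.finrank_self]; decide) hK a_cube) (congrArg (algebraMap (𝓞 L) L) smul_a)
  exact RingOfIntegers.ext (DFunLike.congr_fun hom_eq (x : K))

variable [NumberField k]

theorem prod_galClass_eq_one [IsGalois k L] [IsPrincipalIdealRing (𝓞 k)]
    (c : ClassGroup (𝓞 L)) : ∏ g : Gal(L/k), galClass g c = 1 := by
  obtain ⟨I, hI, rfl⟩ := exists_idealClass_eq c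
  obtain ⟨x, hx⟩ := (IsPrincipalIdealRing.principal (Ideal.relNorm (𝓞 k) I)).principal
  simp only [galClass_idealClass]
  rw [prod_idealClass, idealClass_eq_one_iff, prod_smul_eq_map_relNorm, hx,
    Ideal.submodule_span_eq, Ideal.map_span, Set.image_singleton]
  exact ⟨_, rfl⟩

theorem galClass_galClass_classHom_eq {R S G H : Type*} [CommRing R] [IsDedekindDomain R]
    [CommRing S] [IsDedekindDomain S] [Group G] [Group H] [MulSemiringAction G R]
    [MulSemiringAction H R] {f : S →+* R} {hf : Function.Injective f} {g g' : G} {h : H}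
    (hfg : ∀ x, h • g • f x = g' • g • f x) (c : ClassGroup S) :
    galClass h (galClass g (classHom f hf c)) = galClass g' (galClass g (classHom f hf c)) := by
  obtain ⟨I, hI, rfl⟩ := exists_idealClass_eq c
  simp only [classHom_idealClass, galClass_idealClass]
  refine idealClass_congr ?_ _ _
  rw [smul_ideal_map, smul_ideal_map, smul_ideal_map]
  exact congrArg (Ideal.map · I) (RingHom.ext hfg)

theorem card_ker_powMonoidHom_three_le_card_ambiguousClasses [IsGalois k L]
    [IsPrincipalIdealRing (𝓞 k)] (hKL : Module.finrank K L = 2) (hcard : Nat.card Gal(L/k) = 3)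
    {σ : Gal(L/k)} (hσ : ∀ g, g ∈ Subgroup.zpowers σ) {τ : Gal(L/K)}
    (hτσ : ∀ x : 𝓞 K, τ • σ • algebraMap (𝓞 K) (𝓞 L) x = σ • σ • algebraMap (𝓞 K) (𝓞 L) x) :
    Nat.card (powMonoidHom 3 : ClassGroup (𝓞 K) →* ClassGroup (𝓞 K)).ker ≤
      Nat.card (ambiguousClasses σ) := by
  refine card_ker_cube_le_card_fixedSubgroup (classHom (algebraMap (𝓞 K) (𝓞 L))
    (FaithfulSMul.algebraMap_injective _ _)) (galClass σ) (galClass τ) (fun c hc => ?_)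
    (galClass_classHom_algebraMap τ) (fun c => ?_) fun c => ?_
  · exact eq_one_of_classHom_eq_one (by rw [hKL]; decide) hc
  · exact galClass_galClass_classHom_eq hτσ c
  · set d := classHom (algebraMap (𝓞 K) (𝓞 L)) (FaithfulSMul.algebraMap_injective _ _) c
    have prod_eq := prod_galClass_eq_one (k := k) d
    rw [prod_eq_prod_range_pow hσ fun g : Gal(L/k) => galClass g d,
      orderOf_eq_card_of_forall_mem_zpowers hσ, hcard] at prod_eq
    simpa only [Finset.prod_range_succ, Finset.prod_range_zero, one_mul, pow_succ, pow_zero,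
      galClass_one, galClass_mul] using prod_eq

theorem exists_generator_smul_eq_mul [IsGalois k L] (hcard : Nat.card Gal(L/k) = 3)
    (hk : ¬3 ∣ Module.finrank ℚ k) {ω : 𝓞 k} (hω : IsPrimitiveRoot ω 3) {N : ℕ} (hN : N.Prime)
    {a : 𝓞 L} (ha : a ^ 3 = N) :
    ∃ σ : Gal(L/k), (∀ g, g ∈ Subgroup.zpowers σ) ∧ σ • a = algebraMap (𝓞 k) (𝓞 L) ω * a := by
  have a_cube : (a : L) ^ 3 = N := by exact_mod_cast congrArg (algebraMap (𝓞 L) L) ha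
  have ω_cube : (ω : k) ^ 3 = 1 := by exact_mod_cast congrArg (algebraMap (𝓞 k) k) hω.pow_eq_one
  obtain ⟨σ, hσ⟩ := exists_algEquiv_apply_eq_mul Nat.prime_three hN hk ω_cube a_cube
  have smul_a : σ • a = algebraMap (𝓞 k) (𝓞 L) ω * a := RingOfIntegers.ext hσ
  have := Fact.mk Nat.prime_three
  refine ⟨σ, fun g => mem_zpowers_of_prime_card hcard ?_, smul_a⟩
  rintro rfl
  have a_ne : a ≠ 0 := by
    rintro rfl
    exact hN.ne_zero (by simpa using ha.symm)
  refine (isPrimitiveRoot_map (algebraMap (𝓞 k) (𝓞 L)) hω).ne_one (by decide) ?_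
  exact mul_right_cancel₀ a_ne (by rw [← smul_a, one_smul, one_mul])

theorem finrank_eq_finrank_of_isCyclotomicExtension {n : ℕ} [NeZero n]
    (hirr : Irreducible (cyclotomic n K)) [IsCyclotomicExtension {n} ℚ k]
    [IsCyclotomicExtension {n} K L] : Module.finrank k L = Module.finrank ℚ K := by
  refine Nat.mul_left_cancel (n := n.totient) (Nat.totient_pos.2 (NeZero.pos n)) ?_
  rw [← IsCyclotomicExtension.Rat.finrank n k, Module.finrank_mul_finrank,
    IsCyclotomicExtension.Rat.finrank n k, ← IsCyclotomicExtension.finrank L hirr, mul_comm,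
    Module.finrank_mul_finrank]

theorem card_ker_powMonoidHom_three_le_three_of_smul_eq [IsGalois k L]
    [IsCyclotomicExtension {3} ℚ k] (hK : Module.finrank ℚ K = 3) (hKL : Module.finrank K L = 2)
    (hcard : Nat.card Gal(L/k) = 3) {N : ℕ} (hN : N.Prime) (hNmod : N % 3 = 1) {a : 𝓞 K}
    (ha : a ^ 3 = N) {ω : (𝓞 k)ˣ} (hω : IsPrimitiveRoot ω 3) {σ : Gal(L/k)}
    (hσ : ∀ g, g ∈ Subgroup.zpowers σ) (hσa : σ • algebraMap (𝓞 K) (𝓞 L) a =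
      algebraMap (𝓞 k) (𝓞 L) ω * algebraMap (𝓞 K) (𝓞 L) a) {τ : Gal(L/K)}
    (hτω : τ • algebraMap (𝓞 k) (𝓞 L) ω = algebraMap (𝓞 k) (𝓞 L) ω ^ 2) :
    Nat.card (powMonoidHom 3 : ClassGroup (𝓞 K) →* ClassGroup (𝓞 K)).ker ≤ 3 := by
  have := IsCyclotomicExtension.Rat.three_pid k
  have finrank_L : Module.finrank ℚ L = 6 := by
    rw [← Module.finrank_mul_finrank ℚ K L, hK, hKL]
  obtain ⟨P₁, P₂, P₃, triple, hP₃⟩ := exists_isRamifiedTriple finrank_L hcard hω hN hNmod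
    (by rw [← map_pow, ha, map_natCast]) hσ hσa (smul_algebraMap τ a) hτω
  refine (card_ker_powMonoidHom_three_le_card_ambiguousClasses hKL hcard hσ
    (smul_smul_algebraMap_eq hK hN ha hσa hτω)).trans ?_
  exact triple.card_ambiguousClasses_le_three hcard (rank_units_pos (finrank_L ▸ by decide)) hω
    hP₃ hσ hσa

theorem card_ker_powMonoidHom_three_le_three_of_isCyclotomicExtension
    (k L : Type*) [Field k] [NumberField k] [Field L] [NumberField L] [Algebra k L] [Algebra K L]
    [IsCyclotomicExtension {3} ℚ k] [IsCyclotomicExtension {3} K L] (hK : Module.finrank ℚ K = 3)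
    {N : ℕ} (hN : N.Prime) (hNmod : N % 3 = 1) {a : 𝓞 K} (ha : a ^ 3 = N) :
    Nat.card (powMonoidHom 3 : ClassGroup (𝓞 K) →* ClassGroup (𝓞 K)).ker ≤ 3 := by
  have totient_three : Nat.totient 3 = 2 := Nat.totient_prime Nat.prime_three
  have cyclotomic_irreducible : Irreducible (cyclotomic 3 K) :=
    irreducible_cyclotomic_three_of_odd_finrank (hK ▸ by decide)
  have finrank_KL : Module.finrank K L = 2 := by
    rw [IsCyclotomicExtension.finrank L cyclotomic_irreducible, totient_three]
  have finrank_kL : Module.finrank k L = 3 := by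
    rw [finrank_eq_finrank_of_isCyclotomicExtension cyclotomic_irreducible, hK]
  have three_not_dvd : ¬3 ∣ Module.finrank ℚ k := by
    rw [IsCyclotomicExtension.Rat.finrank 3 k, totient_three]
    decide
  have ω_primitive := (IsCyclotomicExtension.zeta_spec 3 ℚ k).toInteger_isPrimitiveRoot
  obtain ⟨ω, hω⟩ := ω_primitive.isUnit (by decide)
  rw [← hω] at ω_primitive
  have a_cube : algebraMap (𝓞 K) (𝓞 L) a ^ 3 = N := by rw [← map_pow, ha, map_natCast]
  have a_cube' : algebraMap (𝓞 L) L (algebraMap (𝓞 K) (𝓞 L) a) ^ 3 = N := by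
    rw [← map_pow, a_cube, map_natCast]
  have zeta_primitive := isPrimitiveRoot_map (algebraMap (𝓞 k) k) ω_primitive
  have : IsGalois k L :=
    isGalois_of_pow_eq_natCast Nat.prime_three hN three_not_dvd finrank_kL zeta_primitive a_cube'
  have : IsGalois K L := IsCyclotomicExtension.isGalois {3} K L
  have card_gal : Nat.card Gal(L/k) = 3 := by rw [IsGalois.card_aut_eq_finrank, finrank_kL]
  obtain ⟨σ, hσ, hσa⟩ :=
    exists_generator_smul_eq_mul card_gal three_not_dvd ω_primitive hN a_cube
  obtain ⟨τ, hτ⟩ := exists_algEquiv_apply_eq_pow cyclotomic_irreducible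
    (isPrimitiveRoot_map (algebraMap k L) zeta_primitive) (m := 2) (by decide)
  have hτω : τ • algebraMap (𝓞 k) (𝓞 L) ω = algebraMap (𝓞 k) (𝓞 L) ω ^ 2 :=
    RingOfIntegers.ext hτ
  exact card_ker_powMonoidHom_three_le_three_of_smul_eq hK finrank_KL card_gal hN hNmod ha
    (IsPrimitiveRoot.coe_units_iff.1 ω_primitive) hσ hσa hτω

end TorsionBound

section NormsModuloPrime

open NumberField

theorem norm_algebraMap_add_of_dvd_pow {R S F : Type*} [CommRing R] [CommRing S] [Algebra R S]
    [Module.Free R S] [Module.Finite R S] [CommRing F] [IsDomain F] (f : R →+* F) {n : R}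
    (hn : f n = 0) {x : S} {k : ℕ} (hx : algebraMap R S n ∣ x ^ k) (b : R) :
    f (Algebra.norm R (algebraMap R S b + x)) = f b ^ Module.finrank R S := by
  classical
  have := f.domain_nontrivial
  let B := Module.Free.chooseBasis R S
  let φ := f.mapMatrix.comp (Algebra.leftMulMatrix B).toRingHom
  have φ_algebraMap (r : R) : φ (algebraMap R S r) = Matrix.scalar _ (f r) := by
    change f.mapMatrix (Algebra.leftMulMatrix B (algebraMap R S r)) = _
    rw [AlgHom.commutes, Matrix.algebraMap_eq_diagonal, RingHom.mapMatrix_apply,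
      Matrix.diagonal_map f.map_zero]
    rfl
  have φ_nilpotent : IsNilpotent (φ (-x)) := by
    obtain ⟨y, hy⟩ := hx
    refine ⟨k, ?_⟩
    rw [← map_pow, neg_pow, hy, map_mul, map_mul, φ_algebraMap, hn, map_zero, zero_mul, mul_zero]
  have charpoly_eq := sub_eq_zero.1
    (Matrix.isNilpotent_charpoly_sub_pow_of_isNilpotent φ_nilpotent).eq_zero
  rw [Algebra.norm_eq_matrix_det B, RingHom.map_det]
  change (φ (algebraMap R S b + x)).det = _
  rw [← sub_neg_eq_add, map_sub, φ_algebraMap, ← Matrix.eval_charpoly, charpoly_eq,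
    Polynomial.eval_pow, Polynomial.eval_X, Module.finrank_eq_card_chooseBasisIndex]

theorem exists_zmod_pow_eq_absNorm {K : Type*} [Field K] [NumberField K] {p N : ℕ} (hp : Odd p)
    (hN : N.Prime) (hK : Module.finrank ℚ K = p) {a : 𝓞 K} (ha : a ^ p = N) (x : 𝓞 K) :
    ∃ b : ZMod N, b ^ p = Ideal.absNorm (Ideal.span {x}) := by
  have := Fact.mk hN
  have absNorm_a : Ideal.absNorm (Ideal.span {a}) = N := by
    refine Nat.pow_left_injective hp.pos.ne' ?_
    exact (absNorm_span_pow_of_pow_eq_natCast ha).trans (hK ▸ rfl)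
  obtain ⟨b, hb⟩ := exists_intCast_sub_mem (absNorm_a.symm ▸ hN) x
  have norm_eq : ((Algebra.norm ℤ x : ℤ) : ZMod N) = (b : ZMod N) ^ p := by
    have dvd_pow : algebraMap ℤ (𝓞 K) N ∣ (x - b) ^ p := by
      rw [algebraMap_int_eq, eq_intCast, Int.cast_natCast, ← ha]
      exact pow_dvd_pow_of_dvd (Ideal.mem_span_singleton.1 hb) p
    have key := norm_algebraMap_add_of_dvd_pow (Int.castRingHom (ZMod N))
      (by rw [eq_intCast, Int.cast_natCast, ZMod.natCast_self]) dvd_pow b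
    rwa [algebraMap_int_eq, eq_intCast, eq_intCast, eq_intCast, add_sub_cancel,
      RingOfIntegers.rank, hK] at key
  rw [Ideal.absNorm_span_singleton]
  rcases Int.natAbs_eq (Algebra.norm ℤ x) with h | h
  · exact ⟨b, by rw [← norm_eq, h, Int.cast_natCast, Int.natAbs_natCast]⟩
  · refine ⟨-b, ?_⟩
    rw [hp.neg_pow, ← norm_eq, h, Int.natAbs_neg, Int.natAbs_natCast, Int.cast_neg, neg_neg,
      Int.cast_natCast]

end NormsModuloPrime

section InertPrimes

open NumberField

theorem exists_forall_pow_ne {G : Type*} [Group G] [Finite G] {p : ℕ} [hp : Fact p.Prime]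
    (h : p ∣ Nat.card G) : ∃ g : G, ∀ x, x ^ p ≠ g := by
  by_contra! surjective
  have injective : Function.Injective fun x : G => x ^ p :=
    Finite.injective_iff_surjective.2 surjective
  obtain ⟨x, hx⟩ := exists_prime_orderOf_dvd_card' p h
  have x_eq : x = 1 := injective (by simp only [one_pow, ← hx, pow_orderOf_eq_one])
  rw [x_eq, orderOf_one] at hx
  exact hp.out.one_lt.ne hx

theorem exists_prime_forall_zmod_pow_ne {p N : ℕ} (hp : p.Prime) (hp_odd : Odd p) (hN : N.Prime)
    (hNp : N ≡ 1 [MOD p]) : ∃ q > N, q.Prime ∧ q ≡ 2 [MOD p] ∧ ∀ x : ZMod N, x ^ p ≠ q := by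
  have := Fact.mk hp
  have := Fact.mk hN
  have coprime : N.Coprime p := hNp.gcd_eq.trans (Nat.gcd_one_left p)
  obtain ⟨g, hg⟩ := exists_forall_pow_ne (G := (ZMod N)ˣ) (p := p) (by
    rw [Nat.card_eq_fintype_card, ZMod.card_units]
    exact (Nat.modEq_iff_dvd' hN.one_lt.le).1 hNp.symm)
  obtain ⟨r, hr_two, hr_g⟩ := Nat.chineseRemainder coprime.symm 2 (g : ZMod N).val
  have r_coprime : r.Coprime (p * N) :=
    Nat.Coprime.mul_right (hr_two.gcd_eq.trans (Nat.coprime_two_left.2 hp_odd))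
      (hr_g.gcd_eq.trans (ZMod.val_coe_unit_coprime g))
  obtain ⟨q, hqN, hq, hqr⟩ :=
    Nat.forall_exists_prime_gt_and_modEq N (mul_ne_zero hp.ne_zero hN.ne_zero) r_coprime
  have q_eq : (q : ZMod N) = g := by
    rw [(ZMod.natCast_eq_natCast_iff _ _ _).2 ((hqr.of_mul_left p).trans hr_g),
      ZMod.natCast_zmod_val]
  refine ⟨q, hqN, hq, (hqr.of_mul_right N).trans hr_two, fun x hx => ?_⟩
  rw [q_eq] at hx
  obtain ⟨u, rfl⟩ := (isUnit_pow_iff hp.ne_zero).1 (hx ▸ g.isUnit)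
  exact hg u (Units.ext hx)

theorem pow_injective_of_coprime {F : Type*} [Field F] [Finite F] {n : ℕ} (hn : n ≠ 0)
    (h : n.Coprime (Nat.card F - 1)) : Function.Injective fun x : F => x ^ n := by
  intro x y (hxy : x ^ n = y ^ n)
  obtain rfl | hy := eq_or_ne y 0
  · exact (pow_eq_zero_iff hn).1 (hxy.trans (zero_pow hn))
  have quotient_ne : x / y ≠ 0 := fun h0 => by
    rw [(div_eq_zero_iff.1 h0).resolve_right hy, zero_pow hn] at hxy
    exact pow_ne_zero n hy hxy.symm
  let := Fintype.ofFinite F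
  refine (div_eq_one_iff_eq hy).1 ((pow_eq_one_iff_of_coprime h).1 ⟨?_, ?_⟩)
  · rw [div_pow, hxy, div_self (pow_ne_zero n hy)]
  · rw [Nat.card_eq_fintype_card]
    exact FiniteField.pow_card_sub_one_eq_one _ quotient_ne

theorem dvd_finrank_mul_of_dvd_sub {R S : Type*} [CommRing R] [Nontrivial R] [CommRing S]
    [Algebra R S] [Module.Free R S] {a : S} (ha : Algebra.trace R S a = 0) {q n : R}
    (h : algebraMap R S q ∣ a - algebraMap R S n) :
    q ∣ Module.finrank R S * n := by
  have := congrArg (Algebra.trace R S) h.choose_spec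
  rw [map_sub, ha, Algebra.trace_algebraMap, ← Algebra.smul_def, map_smul, zero_sub,
    nsmul_eq_mul] at this
  exact dvd_neg.1 ⟨_, this⟩

theorem exists_int_pow_modEq_dvd_sub {R : Type*} [CommRing R] {p q N : ℕ} (hq : q.Prime)
    (hp : p ≠ 0) (hqp : p.Coprime (q - 1)) [Finite (R ⧸ Ideal.span {(q : R)})]
    (maximal : (Ideal.span {(q : R)}).IsMaximal)
    (hR : p.Coprime (Nat.card (R ⧸ Ideal.span {(q : R)}) - 1)) {a : R} (ha : a ^ p = N) :
    ∃ n : ℤ, n ^ p ≡ N [ZMOD q] ∧ (q : R) ∣ a - n := by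
  have := Fact.mk hq
  let := Ideal.Quotient.field (Ideal.span {(q : R)})
  have surjective := Finite.surjective_of_injective
    (pow_injective_of_coprime (F := ZMod q) hp (by rwa [Nat.card_zmod]))
  obtain ⟨b, hb : b ^ p = N⟩ := surjective N
  obtain ⟨n, rfl⟩ := ZMod.intCast_surjective b
  have n_pow : n ^ p ≡ N [ZMOD q] := by
    rw [← ZMod.intCast_eq_intCast_iff, Int.cast_pow, hb, Int.cast_natCast]
  refine ⟨n, n_pow, Ideal.mem_span_singleton.1
    (Ideal.Quotient.eq.1 (pow_injective_of_coprime hp hR ?_))⟩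
  have dvd_pow_sub := map_dvd (Int.castRingHom R) n_pow.dvd
  simp only [eq_intCast, Int.cast_sub, Int.cast_pow, Int.cast_natCast, ← ha] at dvd_pow_sub
  change Ideal.Quotient.mk _ a ^ p = Ideal.Quotient.mk _ (n : R) ^ p
  rw [← map_pow, ← map_pow, Ideal.Quotient.eq, Ideal.mem_span_singleton]
  exact dvd_pow_sub

theorem coprime_sub_one_of_modEq_two {p m : ℕ} (hm : 0 < m) (h : m ≡ 2 [MOD p]) :
    p.Coprime (m - 1) := by
  have : m - 1 ≡ 1 [MOD p] :=
    Nat.ModEq.add_right_cancel' 1 (by rwa [Nat.sub_add_cancel hm])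
  exact Nat.Coprime.symm (this.gcd_eq.trans (Nat.gcd_one_left p))

theorem not_isMaximal_span_natCast {K : Type*} [Field K] [NumberField K] {p q N : ℕ}
    (hp : p.Prime) (hp_odd : Odd p) (hq : q.Prime) (hqp : q ≡ 2 [MOD p]) (hN : N.Prime)
    (hqN : q ≠ N) (hK : Module.finrank ℚ K = p) {a : 𝓞 K} (ha : a ^ p = N) :
    ¬(Ideal.span {(q : 𝓞 K)}).IsMaximal := by
  intro maximal
  have := Fact.mk hp
  have card_quot : Nat.card (𝓞 K ⧸ Ideal.span {(q : 𝓞 K)}) = q ^ p := by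
    rw [← Submodule.cardQuot_apply, ← Ideal.absNorm_apply, Ideal.absNorm_span_natCast,
      RingOfIntegers.rank, hK]
  have : Finite (𝓞 K ⧸ Ideal.span {(q : 𝓞 K)}) :=
    Nat.finite_of_card_ne_zero (card_quot ▸ pow_ne_zero p hq.ne_zero)
  have pow_modEq : q ^ p ≡ 2 [MOD p] := by
    refine Nat.ModEq.trans ?_ hqp
    rw [← ZMod.natCast_eq_natCast_iff, Nat.cast_pow, ZMod.pow_card]
  obtain ⟨n, n_pow, q_dvd⟩ := exists_int_pow_modEq_dvd_sub hq hp.ne_zero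
    (coprime_sub_one_of_modEq_two hq.pos hqp) maximal
    (card_quot ▸ coprime_sub_one_of_modEq_two (pow_pos hq.pos p) pow_modEq) ha
  have trace_eq : Algebra.trace ℤ (𝓞 K) a = 0 := by
    have := trace_eq_zero_of_pow_eq_natCast (F := ℚ) hp hN
      (by rw [Module.finrank_self]; exact hp.not_dvd_one) (congrArg (algebraMap (𝓞 K) K) ha)
    exact Int.cast_eq_zero.1 ((Algebra.coe_trace_int a).trans this)
  have q_dvd_mul : (q : ℤ) ∣ p * n := by
    rw [← hK, ← RingOfIntegers.rank]
    exact dvd_finrank_mul_of_dvd_sub trace_eq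
      (by rwa [algebraMap_int_eq, eq_intCast, eq_intCast, Int.cast_natCast])
  rcases (Nat.prime_iff_prime_int.1 hq).dvd_or_dvd q_dvd_mul with q_dvd_p | q_dvd_n
  · rw [(Nat.prime_dvd_prime_iff_eq hq hp).1 (Int.natCast_dvd_natCast.1 q_dvd_p)] at hqp
    have p_dvd_two := (hqp.dvd_iff dvd_rfl).1 dvd_rfl
    exact hp_odd.ne_two_of_dvd_nat dvd_rfl
      ((Nat.prime_dvd_prime_iff_eq hp Nat.prime_two).1 p_dvd_two)
  · have q_dvd_N : (q : ℤ) ∣ N := n_pow.dvd_iff.1 (dvd_pow q_dvd_n hp.ne_zero)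
    exact hqN ((Nat.prime_dvd_prime_iff_eq hq hN).1 (Int.natCast_dvd_natCast.1 q_dvd_N))

theorem exists_absNorm_eq_pow {K : Type*} [Field K] [NumberField K] {q : ℕ} (hq : q.Prime)
    (h : ¬(Ideal.span {(q : 𝓞 K)}).IsMaximal) :
    ∃ P : Ideal (𝓞 K), ∃ f ≠ 0, f < Module.finrank ℚ K ∧ Ideal.absNorm P = q ^ f := by
  have absNorm_q : Ideal.absNorm (Ideal.span {(q : 𝓞 K)}) = q ^ Module.finrank ℚ K := by
    rw [Ideal.absNorm_span_natCast, RingOfIntegers.rank]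
  have span_ne_top : Ideal.span {(q : 𝓞 K)} ≠ ⊤ := by
    rw [Ne, ← Ideal.absNorm_eq_one_iff, absNorm_q]
    exact (Nat.one_lt_pow Module.finrank_pos.ne' hq.one_lt).ne'
  obtain ⟨P, P_maximal, span_le⟩ := Ideal.exists_le_maximal _ span_ne_top
  obtain ⟨J, hJ⟩ := Ideal.dvd_iff_le.2 span_le
  obtain ⟨f, f_le, hf⟩ := (Nat.dvd_prime_pow hq).1
    (absNorm_q ▸ Ideal.absNorm_dvd_absNorm_of_le span_le)
  refine ⟨P, f, ?_, f_le.lt_of_ne ?_, hf⟩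
  · rintro rfl
    exact P_maximal.ne_top (Ideal.absNorm_eq_one_iff.1 hf)
  · rintro rfl
    have absNorm_J : Ideal.absNorm J = 1 := by
      have := congrArg Ideal.absNorm hJ
      rw [map_mul, absNorm_q, hf] at this
      exact (Nat.mul_eq_left (pow_pos hq.pos _).ne').1 this.symm
    rw [Ideal.absNorm_eq_one_iff.1 absNorm_J, Ideal.mul_top] at hJ
    exact h (hJ ▸ P_maximal)

theorem dvd_card_classGroup {K : Type*} [Field K] [NumberField K] {p N : ℕ}
    (hp : p.Prime) (hp_odd : Odd p) (hN : N.Prime) (hNp : N ≡ 1 [MOD p])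
    (hK : Module.finrank ℚ K = p) {a : 𝓞 K} (ha : a ^ p = N) :
    p ∣ Nat.card (ClassGroup (𝓞 K)) := by
  have := Fact.mk hN
  obtain ⟨q, hqN, hq, hqp, q_ne_pow⟩ := exists_prime_forall_zmod_pow_ne hp hp_odd hN hNp
  obtain ⟨P, f, f_ne, f_lt, absNorm_P⟩ := exists_absNorm_eq_pow hq
    (not_isMaximal_span_natCast hp hp_odd hq hqp hN hqN.ne' hK ha)
  by_contra not_dvd
  have P_ne_bot : P ≠ ⊥ := by
    rw [Ne, ← Ideal.absNorm_eq_zero_iff, absNorm_P]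
    exact pow_ne_zero f hq.ne_zero
  obtain ⟨x, hx⟩ := (idealClass_eq_one_iff (pow_ne_zero (Nat.card (ClassGroup (𝓞 K))) P_ne_bot)).1
    (by rw [idealClass_pow P_ne_bot, pow_card_eq_one'])
  obtain ⟨b, hb⟩ := exists_zmod_pow_eq_absNorm hp_odd hN hK ha x
  rw [← hx, map_pow, absNorm_P, ← pow_mul, Nat.cast_pow] at hb
  have coprime : (f * Nat.card (ClassGroup (𝓞 K))).Coprime p :=
    Nat.Coprime.mul_left (Nat.coprime_of_lt_prime f_ne (hK ▸ f_lt) hp).symm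
      (hp.coprime_iff_not_dvd.2 not_dvd).symm
  obtain ⟨c, hc⟩ := (pow_mem_range_pow_of_coprime coprime (q : ZMod N)).1 ⟨b, hb⟩
  exact q_ne_pow c hc

end InertPrimes

section CubicTorsion

open NumberField

theorem exists_ringOfIntegers_pow_eq_natCast {K : Type*} [Field K] {α : K} {n N : ℕ}
    (hn : 0 < n) (hα : α ^ n = N) : ∃ a : 𝓞 K, a ^ n = N := by
  have α_integral : IsIntegral ℤ α := by
    refine IsIntegral.of_pow hn (hα ▸ ?_)
    rw [← map_natCast (algebraMap ℤ K)]
    exact isIntegral_algebraMap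
  refine ⟨⟨α, α_integral⟩, RingOfIntegers.ext (hα.trans (map_natCast (algebraMap (𝓞 K) K) N).symm)⟩

theorem card_ker_powMonoidHom_three_le_three {K : Type*} [Field K] [NumberField K]
    (L : Type*) [Field L] [NumberField L] [Algebra K L] [IsCyclotomicExtension {3} K L]
    (hK : Module.finrank ℚ K = 3) {N : ℕ} (hN : N.Prime) (hNmod : N % 3 = 1) {a : 𝓞 K}
    (ha : a ^ 3 = N) :
    Nat.card (powMonoidHom 3 : ClassGroup (𝓞 K) →* ClassGroup (𝓞 K)).ker ≤ 3 := by
  have ζ_primitive := IsCyclotomicExtension.zeta_spec 3 K L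
  let k := IntermediateField.adjoin ℚ {IsCyclotomicExtension.zeta 3 K L}
  have : IsCyclotomicExtension {3} ℚ k :=
    ζ_primitive.intermediateField_adjoin_isCyclotomicExtension ℚ
  exact card_ker_powMonoidHom_three_le_three_of_isCyclotomicExtension k L hK hN hNmod ha

end CubicTorsion

/-- For `p = 3` and a prime `N ≡ 1 (mod 3)`, the `3`-rank of the class group of
`K = ℚ(N^{1/3})` equals `1`. -/
theorem statement7 (N : ℕ) (hN : N.Prime) (hNmod : N % 3 = 1)
    (K : Type*) [Field K] [NumberField K]
    (α : K) (hα : α ^ 3 = (N : K)) (hKdeg : Module.finrank ℚ K = 3) :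
    classRank 3 K = 1 := by
  obtain ⟨a, ha⟩ := exists_ringOfIntegers_pow_eq_natCast three_pos hα
  have rank_pos : 0 < classRank 3 K :=
    pRank_pos (dvd_card_classGroup Nat.prime_three (by decide) hN hNmod hKdeg ha)
  have pow_rank_le : 3 ^ classRank 3 K ≤ 3 ^ 1 :=
    (pow_pRank 3 _).trans_le
      (card_ker_powMonoidHom_three_le_three (CyclotomicField 3 K) hKdeg hN hNmod ha)
  exact le_antisymm ((Nat.pow_le_pow_iff_right (by decide)).1 pow_rank_le) rank_pos
end

section
/- Let p be an odd prime and let N be a prime with N ≡ 1 (mod p). Then r_K ≥ 1; equivalently, p divides the class number of K = ℚ(N^{1/p}). -/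
open scoped TensorProduct

/-!
The prime `N` is totally ramified in `K`, with `(N) = (α) ^ p`, and the residue field at `(α)` is
`𝔽_N`. Hence an algebraic integer `γ` is congruent modulo `(α)` to a rational integer `c`, and its
norm is congruent to `c ^ p` modulo `N`: norms of principal ideals are `p`-th powers in `𝔽_N`, the
sign being harmless because `p` is odd. By Dirichlet there is a prime `q` that is a primitive root
modulo `N` and is congruent to `-1` modulo `p`. Since `p` is odd, it is prime to `q (q - 1)`,
so `X ^ p - N` has a simple root modulo `q` and there is an ideal `P` of norm `q`. If `P ^ k` is
principal, then `q ^ k` is a `p`-th power in `𝔽_N`, which forces `p ∣ k`.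
-/

section OrderAndExponent

lemma dvd_of_pow_eq_pow_of_orderOf_eq_exponent {G : Type*} [Monoid G] {g y : G} {n k : ℕ}
    (hg : orderOf g = Monoid.exponent G) (hexp : Monoid.exponent G ≠ 0)
    (hn : n ∣ Monoid.exponent G) (h : g ^ k = y ^ n) : n ∣ k := by
  obtain ⟨m, hm⟩ := hn
  have hm0 : m ≠ 0 := right_ne_zero_of_mul (hm ▸ hexp)
  have hgkm : g ^ (k * m) = 1 := by
    rw [pow_mul, h, ← pow_mul, ← hm, Monoid.pow_exponent_eq_one]
  have hdvd : n * m ∣ k * m := hm ▸ hg ▸ orderOf_dvd_of_pow_eq_one hgkm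
  exact Nat.dvd_of_mul_dvd_mul_right (Nat.pos_of_ne_zero hm0) hdvd

/- An element of maximal order stays of order `n` in `G ⧸ G ^ n`, so it spans a free
`ZMod n`-module of rank one there. -/
lemma one_le_pRank_of_dvd_exponent {G : Type*} [CommGroup G] [Finite G] {n : ℕ} (hn1 : n ≠ 1)
    (hn : n ∣ Monoid.exponent G) : 1 ≤ pRank n G := by
  have : Nontrivial (ZMod n) := ZMod.nontrivial_iff.mpr hn1
  obtain ⟨g, hg⟩ := Monoid.exists_orderOf_eq_exponent (G := G) .of_finite
  let reduce : ZMod n ⊗[ℤ] Additive G →ₗ[ZMod n] ModN (Additive G) n :=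
    (TensorProduct.isBaseChange ℤ (Additive G) (ZMod n)).lift (ModN.mkQ n).toIntLinearMap
  have hreduce : reduce (1 ⊗ₜ Additive.ofMul g) = ModN.mkQ n (Additive.ofMul g) :=
    IsBaseChange.lift_eq _ _ _
  have htorsion (a : ZMod n) (ha : a • reduce (1 ⊗ₜ Additive.ofMul g) = 0) : a = 0 := by
    have : NeZero n := ⟨ne_zero_of_dvd_ne_zero Monoid.exponent_ne_zero_of_finite hn⟩
    obtain ⟨k, rfl⟩ := ZMod.natCast_zmod_surjective a
    rw [hreduce, Nat.cast_smul_eq_nsmul, ← map_nsmul] at ha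
    obtain ⟨y, hy⟩ := (Submodule.Quotient.mk_eq_zero _).mp ha
    have hgy : g ^ k = y.toMul ^ n := by
      simpa using congrArg Additive.toMul hy.symm
    exact (ZMod.natCast_eq_zero_iff k n).mpr <|
      dvd_of_pow_eq_pow_of_orderOf_eq_exponent hg Monoid.exponent_ne_zero_of_finite hn hgy
  have hindep : LinearIndependent (ZMod n)
      fun _ : Unit ↦ (1 ⊗ₜ[ℤ] Additive.ofMul g : ZMod n ⊗[ℤ] Additive G) :=
    .of_subsingleton' () fun a ha ↦ htorsion a (by rw [← map_smul, ha, map_zero])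
  rw [pRank, ← Fintype.card_unit]
  exact hindep.fintype_card_le_finrank

end OrderAndExponent

section Norm

open Polynomial

lemma det_scalar_sub_of_isNilpotent {ι A : Type*} [Fintype ι] [DecidableEq ι] [CommRing A]
    [IsReduced A] {M : Matrix ι ι A} (hM : IsNilpotent M) (a : A) :
    (Matrix.scalar ι a - M).det = a ^ Fintype.card ι := by
  have hnil := (Matrix.isNilpotent_charpoly_sub_pow_of_isNilpotent hM).map (evalRingHom a)
  have heval : M.charpoly.eval a - a ^ Fintype.card ι = 0 := by simpa using hnil.eq_zero
  rw [← Matrix.eval_charpoly, sub_eq_zero.mp heval]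

lemma map_norm_algebraMap_sub_of_dvd_pow {R S A : Type*} [CommRing R] [Nontrivial R]
    [CommRing S] [Algebra R S] [Module.Free R S] [Module.Finite R S] [CommRing A] [IsReduced A]
    (f : R →+* A) {a : R} (ha : f a = 0) {x : S} {m : ℕ} (hx : algebraMap R S a ∣ x ^ m) (c : R) :
    f (Algebra.norm R (algebraMap R S c - x)) = f c ^ Module.finrank R S := by
  classical
  let b := Module.Free.chooseBasis R S
  let M := Algebra.leftMulMatrix b x
  have hnil : IsNilpotent (f.mapMatrix M) := by
    obtain ⟨y, hy⟩ := hx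
    refine ⟨m, ?_⟩
    rw [← map_pow, ← map_pow, hy, ← Algebra.smul_def, map_smul]
    ext i j
    simp [ha]
  have hdet : f (Algebra.norm R (algebraMap R S c - x)) =
      (Matrix.scalar _ (f c) - f.mapMatrix M).det := by
    rw [Algebra.norm_eq_matrix_det b, map_sub, RingHom.map_det, map_sub, AlgHom.commutes]
    congr 2
    ext i j
    simp [Matrix.algebraMap_matrix_apply, Matrix.diagonal_apply, apply_ite f]
  rw [hdet, det_scalar_sub_of_isNilpotent hnil, Module.finrank_eq_card_chooseBasisIndex]

lemma norm_algebraMap_sub_eq_eval_minpoly {R S : Type*} [CommRing R] [IsDomain R]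
    [IsIntegrallyClosed R] [CommRing S] [IsDomain S] [Algebra R S] [Module.Free R S]
    [Module.Finite R S] {θ : S} (hθ : (minpoly R θ).natDegree = Module.finrank R S) (r : R) :
    Algebra.norm R (algebraMap R S r - θ) = (minpoly R θ).eval r := by
  have hchar : (Algebra.lmul R S θ).charpoly = minpoly R θ := by
    refine (eq_of_monic_of_dvd_of_natDegree_le (minpoly.monic (Algebra.IsIntegral.isIntegral θ))
      (LinearMap.charpoly_monic _) ?_ ?_)
    · exact minpoly.isIntegrallyClosed_dvd (Algebra.IsIntegral.isIntegral θ)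
        (Algebra.aeval_self_charpoly_lmul θ)
    · rw [hθ, LinearMap.charpoly_natDegree]
  rw [← hchar, LinearMap.eval_charpoly, Algebra.norm_apply, map_sub, AlgHom.commutes]

end Norm

section Eisenstein

open Polynomial

lemma isEisensteinAt_X_pow_sub_C {R : Type*} [CommRing R] [IsDomain R] {π : R} (hπ : Prime π)
    {n : ℕ} (hn : n ≠ 0) : (X ^ n - C π : R[X]).IsEisensteinAt (Ideal.span {π}) := by
  have hprime : (Ideal.span {π}).IsPrime := (Ideal.span_singleton_prime hπ.ne_zero).mpr hπ
  refine (monic_X_pow_sub_C π hn).isEisensteinAt_of_mem_of_notMem hprime.ne_top ?_ ?_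
  · intro i hi
    rw [natDegree_X_pow_sub_C] at hi
    rw [coeff_sub, coeff_X_pow, if_neg hi.ne, zero_sub, neg_mem_iff, coeff_C]
    split_ifs
    · exact Ideal.mem_span_singleton_self π
    · exact zero_mem _
  · rw [coeff_sub, coeff_X_pow, if_neg hn.symm, coeff_C_zero, zero_sub, neg_mem_iff,
      Ideal.span_singleton_pow, Ideal.mem_span_singleton, sq]
    exact fun h ↦ hπ.not_isUnit (hπ.irreducible.squarefree π h)

lemma minpoly_eq_X_pow_sub_C_of_prime {R S : Type*} [CommRing R] [IsDomain R]
    [IsIntegrallyClosed R] [CommRing S] [IsDomain S] [Algebra R S] [Module.IsTorsionFree R S]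
    {π : R} (hπ : Prime π) {n : ℕ} (hn : n ≠ 0) {β : S} (hβ : β ^ n = algebraMap R S π) :
    minpoly R β = X ^ n - C π := by
  have hmonic : (X ^ n - C π).Monic := monic_X_pow_sub_C π hn
  have hroot : aeval β (X ^ n - C π) = 0 := by simp [hβ]
  have hint : IsIntegral R β := ⟨_, hmonic, hroot⟩
  have hirr : Irreducible (X ^ n - C π) :=
    (isEisensteinAt_X_pow_sub_C hπ hn).irreducible
      ((Ideal.span_singleton_prime hπ.ne_zero).mpr hπ) hmonic.isPrimitive
      (by rw [natDegree_X_pow_sub_C]; exact Nat.pos_of_ne_zero hn)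
  have hdvd := minpoly.isIntegrallyClosed_dvd hint hroot
  exact eq_of_monic_of_associated (minpoly.monic hint) hmonic
    ((minpoly.prime_of_isIntegrallyClosed hint).irreducible.associated_of_dvd hirr hdvd)

end Eisenstein

section DegreeOnePrimes

open Polynomial

lemma exists_dvd_eval_and_not_sq_dvd_eval {R : Type*} [CommRing R] [IsDomain R] {f : R[X]}
    {π r : R} (hπ : π ≠ 0) (hr : π ∣ f.eval r) (hr' : ¬ π ∣ f.derivative.eval r) :
    ∃ s, π ∣ f.eval s ∧ ¬ π ^ 2 ∣ f.eval s := by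
  by_cases hsq : π ^ 2 ∣ f.eval r
  · obtain ⟨k, hk⟩ := f.binomExpansion r π
    have hk' : f.eval (r + π) = f.eval r + (f.derivative.eval r * π + k * π ^ 2) := by
      rw [hk, add_assoc]
    refine ⟨r + π, ?_, fun hsq' ↦ hr' ?_⟩
    · rw [hk']
      exact dvd_add hr (dvd_add (dvd_mul_left ..) ((dvd_pow_self π two_ne_zero).mul_left k))
    · rw [hk', dvd_add_right hsq, dvd_add_left (dvd_mul_left ..), sq] at hsq'
      exact (mul_dvd_mul_iff_right hπ).mp hsq'
  · exact ⟨r, hr, hsq⟩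

variable {S : Type*} [CommRing S] [IsDedekindDomain S] [Module.Free ℤ S] [Module.Finite ℤ S]

lemma exists_ideal_absNorm_eq_prime_of_not_sq_dvd {q : ℕ} (hq : q.Prime) {J : Ideal S}
    (hdvd : q ∣ Ideal.absNorm J) (hsq : ¬ q ^ 2 ∣ Ideal.absNorm J) :
    ∃ P : Ideal S, Ideal.absNorm P = q := by
  obtain ⟨P, hPmax, hPq, hPJ⟩ := Ideal.exists_isMaximal_dvd_of_dvd_absNorm' hq J hdvd
  have : P.LiesOver (Ideal.span {(q : ℤ)}) := ⟨hPq.symm⟩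
  set f := (Ideal.span {(q : ℤ)}).inertiaDeg' P
  have hPf : Ideal.absNorm P = q ^ f := Ideal.absNorm_eq_pow_inertiaDeg' P hq
  have hf_ne : f ≠ 0 := fun hf ↦ hPmax.ne_top <| by
    rwa [hf, pow_zero, Ideal.absNorm_eq_one_iff] at hPf
  have hf_lt : f < 2 := by
    by_contra! hf
    exact hsq ((pow_dvd_pow q hf).trans (hPf ▸ map_dvd Ideal.absNorm hPJ))
  have hf : f = 1 := by omega
  exact ⟨P, by rw [hPf, hf, pow_one]⟩

lemma exists_ideal_absNorm_eq_of_simple_root {θ : S}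
    (hθ : (minpoly ℤ θ).natDegree = Module.finrank ℤ S) {q : ℕ} (hq : q.Prime) {r : ℤ}
    (hr : (q : ℤ) ∣ (minpoly ℤ θ).eval r)
    (hr' : ¬ (q : ℤ) ∣ (minpoly ℤ θ).derivative.eval r) :
    ∃ P : Ideal S, Ideal.absNorm P = q := by
  obtain ⟨s, hs, hsq⟩ :=
    exists_dvd_eval_and_not_sq_dvd_eval (Nat.cast_ne_zero.mpr hq.ne_zero) hr hr'
  have hnorm : Ideal.absNorm (Ideal.span {algebraMap ℤ S s - θ}) =
      ((minpoly ℤ θ).eval s).natAbs := by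
    rw [Ideal.absNorm_span_singleton, norm_algebraMap_sub_eq_eval_minpoly hθ]
  refine exists_ideal_absNorm_eq_prime_of_not_sq_dvd hq
    (J := Ideal.span {algebraMap ℤ S s - θ}) ?_ ?_
  · rwa [hnorm, ← Int.natCast_dvd]
  · rwa [hnorm, ← Int.natCast_dvd, Nat.cast_pow]

lemma exists_pow_eq_of_coprime_sub_one {q n : ℕ} [Fact q.Prime] (hn : n.Coprime (q - 1))
    {a : ZMod q} (ha : a ≠ 0) : ∃ b : ZMod q, b ^ n = a := by
  have hcard : (Nat.card (ZMod q)ˣ).Coprime n := by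
    rw [Nat.card_eq_fintype_card, ZMod.card_units]
    exact hn.symm
  obtain ⟨u, hu⟩ := (powCoprime hcard).surjective (Units.mk0 a ha)
  exact ⟨u, by simpa using congrArg Units.val hu⟩

lemma exists_ideal_absNorm_eq_of_pow_finrank_eq_prime {β : S} {N : ℕ} (hN : N.Prime)
    (hβ : β ^ Module.finrank ℤ S = N) {q : ℕ} (hq : q.Prime) (hqN : ¬ q ∣ N)
    (hqn : ¬ q ∣ Module.finrank ℤ S) (hcop : (Module.finrank ℤ S).Coprime (q - 1)) :
    ∃ P : Ideal S, Ideal.absNorm P = q := by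
  have : Fact q.Prime := ⟨hq⟩
  rw [← ZMod.natCast_eq_zero_iff] at hqN hqn
  set n := Module.finrank ℤ S
  have hn0 : n ≠ 0 := Module.finrank_pos.ne'
  have hmin : minpoly ℤ β = X ^ n - C (N : ℤ) :=
    minpoly_eq_X_pow_sub_C_of_prime (Nat.prime_iff_prime_int.mp hN) hn0 (by simpa using hβ)
  obtain ⟨b, hb⟩ := exists_pow_eq_of_coprime_sub_one hcop hqN
  have hb0 : b ≠ 0 := by
    rintro rfl
    exact hqN (by rw [← hb, zero_pow hn0])
  obtain ⟨r, rfl⟩ := ZMod.intCast_surjective b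
  refine exists_ideal_absNorm_eq_of_simple_root (θ := β) (r := r) ?_ hq ?_ ?_
  · rw [hmin, natDegree_X_pow_sub_C]
  · rw [hmin, ← ZMod.intCast_zmod_eq_zero_iff_dvd]
    simp [hb]
  · rw [hmin, ← ZMod.intCast_zmod_eq_zero_iff_dvd]
    simp [derivative_X_pow, hqn, hb0]

end DegreeOnePrimes

section Dirichlet

lemma exists_prime_natCast_eq_and_natCast_eq {m n : ℕ} [NeZero m] [NeZero n] (hmn : m.Coprime n)
    {a : ZMod m} {b : ZMod n} (ha : IsUnit a) (hb : IsUnit b) :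
    ∃ q : ℕ, q.Prime ∧ (q : ZMod m) = a ∧ (q : ZMod n) = b := by
  let e := ZMod.chineseRemainder hmn
  have hunit : IsUnit (e.symm (a, b)) := (Prod.isUnit_iff.mpr ⟨ha, hb⟩).map e.symm
  obtain ⟨q, -, hq, hqab⟩ := Nat.forall_exists_prime_gt_and_eq_mod hunit 0
  have he : ((q : ZMod m), (q : ZMod n)) = (a, b) := by
    rw [← e.apply_symm_apply (a, b), ← hqab, map_natCast]
    rfl
  exact ⟨q, hq, congrArg Prod.fst he, congrArg Prod.snd he⟩

lemma exists_prime_natCast_eq_and_coprime {m n : ℕ} [NeZero m] (hmn : m.Coprime n) (hn : Odd n)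
    {a : ZMod m} (ha : IsUnit a) :
    ∃ q : ℕ, q.Prime ∧ (q : ZMod m) = a ∧ n.Coprime q ∧ n.Coprime (q - 1) := by
  have : NeZero n := ⟨hn.pos.ne'⟩
  obtain ⟨q, hq, hqa, hqn⟩ := exists_prime_natCast_eq_and_natCast_eq hmn ha isUnit_one.neg
  have hq_sub : ((q - 1 : ℕ) : ZMod n) = -(2 : ℕ) := by
    rw [Nat.cast_sub hq.one_le, hqn]
    norm_num
  refine ⟨q, hq, hqa, ?_, ?_⟩
  · rw [Nat.coprime_comm, ← ZMod.isUnit_iff_coprime, hqn]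
    exact isUnit_one.neg
  · rw [Nat.coprime_comm, ← ZMod.isUnit_iff_coprime, hq_sub, IsUnit.neg_iff,
      ZMod.isUnit_iff_coprime]
    exact Nat.coprime_two_left.mpr hn

end Dirichlet

section TotallyRamified

lemma exists_intCast_sub_mem_of_absNorm_prime {S : Type*} [CommRing S] [IsDedekindDomain S]
    [Module.Free ℤ S] {I : Ideal S} (hI : (Ideal.absNorm I).Prime) (γ : S) :
    ∃ c : ℤ, c - γ ∈ I := by
  have : Fintype (S ⧸ I) :=
    @Fintype.ofFinite _ ((Ideal.absNorm_ne_zero_iff I).mp hI.ne_zero)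
  have hcard : Fintype.card (S ⧸ I) = Ideal.absNorm I := by
    rw [← Nat.card_eq_fintype_card]; rfl
  let e := ZMod.ringEquivOfPrime (S ⧸ I) hI hcard
  obtain ⟨c, hc⟩ := ZMod.intCast_surjective (e.symm (Ideal.Quotient.mk I γ))
  refine ⟨c, Ideal.Quotient.eq.mp ?_⟩
  rw [map_intCast, ← e.apply_symm_apply (Ideal.Quotient.mk I γ), ← hc, map_intCast]

variable {S : Type*} [CommRing S] [IsDedekindDomain S] [Module.Free ℤ S] [Module.Finite ℤ S]

lemma absNorm_span_singleton_of_pow_finrank_eq {β : S} {m : ℕ}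
    (hβ : β ^ Module.finrank ℤ S = m) : Ideal.absNorm (Ideal.span {β}) = m := by
  have hpow : Ideal.absNorm (Ideal.span {β}) ^ Module.finrank ℤ S = m ^ Module.finrank ℤ S := by
    rw [← map_pow, Ideal.span_singleton_pow, hβ, Ideal.absNorm_span_natCast]
  exact Nat.pow_left_injective Module.finrank_pos.ne' hpow

variable {N : ℕ} {I : Ideal S}

lemma exists_pow_finrank_eq_norm (hN : N.Prime) (hI : Ideal.absNorm I = N)
    (hrad : I ≤ (Ideal.span {(N : S)}).radical) (γ : S) :
    ∃ c : ZMod N, c ^ Module.finrank ℤ S = (Algebra.norm ℤ γ : ZMod N) := by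
  have : Fact N.Prime := ⟨hN⟩
  obtain ⟨c, hc⟩ := exists_intCast_sub_mem_of_absNorm_prime (hI ▸ hN) γ
  obtain ⟨m, hm⟩ := hrad hc
  have hdvd : algebraMap ℤ S N ∣ (c - γ) ^ m := by
    simpa using Ideal.mem_span_singleton.mp hm
  have hnorm := map_norm_algebraMap_sub_of_dvd_pow (Int.castRingHom (ZMod N)) (by simp) hdvd c
  exact ⟨c, by simpa using hnorm.symm⟩

lemma exists_pow_finrank_eq_absNorm (hN : N.Prime) (hI : Ideal.absNorm I = N)
    (hrad : I ≤ (Ideal.span {(N : S)}).radical) (hodd : Odd (Module.finrank ℤ S)) {J : Ideal S}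
    (hJ : J.IsPrincipal) : ∃ c : ZMod N, c ^ Module.finrank ℤ S = Ideal.absNorm J := by
  obtain ⟨γ, rfl⟩ := hJ
  obtain ⟨c, hc⟩ := exists_pow_finrank_eq_norm hN hI hrad γ
  rw [Ideal.submodule_span_eq, Ideal.absNorm_span_singleton]
  rcases Int.natAbs_eq (Algebra.norm ℤ γ) with h | h
  · refine ⟨c, ?_⟩
    rw [hc, h]
    simp
  · refine ⟨-c, ?_⟩
    rw [hodd.neg_pow, hc, h]
    simp

lemma finrank_dvd_orderOf_mk0 (hN : N.Prime) (hI : Ideal.absNorm I = N)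
    (hrad : I ≤ (Ideal.span {(N : S)}).radical) (hodd : Odd (Module.finrank ℤ S))
    (hdvd : Module.finrank ℤ S ∣ N - 1) (P : nonZeroDivisors (Ideal S)) {u : (ZMod N)ˣ}
    (hu : orderOf u = N - 1) (huP : (u : ZMod N) = Ideal.absNorm (P : Ideal S)) :
    Module.finrank ℤ S ∣ orderOf (ClassGroup.mk0 P) := by
  have : Fact N.Prime := ⟨hN⟩
  set k := orderOf (ClassGroup.mk0 P)
  have hprin : ((P ^ k : nonZeroDivisors (Ideal S)) : Ideal S).IsPrincipal := by
    rw [← ClassGroup.mk0_eq_one_iff (P ^ k).2, Subtype.coe_eta, map_pow, pow_orderOf_eq_one]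
  obtain ⟨c, hc⟩ := exists_pow_finrank_eq_absNorm hN hI hrad hodd hprin
  have hcu : c ^ Module.finrank ℤ S = (u ^ k : (ZMod N)ˣ) := by
    rw [hc, Units.val_pow_eq_pow_val, huP]
    simp
  obtain ⟨v, rfl⟩ : IsUnit c := (isUnit_pow_iff Module.finrank_pos.ne').mp (hcu ▸ Units.isUnit _)
  have hexp : Monoid.exponent (ZMod N)ˣ = N - 1 := by
    rw [IsCyclic.exponent_eq_card, Nat.card_eq_fintype_card, ZMod.card_units]
  exact dvd_of_pow_eq_pow_of_orderOf_eq_exponent (hu.trans hexp.symm)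
    Monoid.exponent_ne_zero_of_finite (hexp ▸ hdvd) (Units.ext hcu.symm)

theorem finrank_dvd_exponent_classGroup {β : S} (hN : N.Prime)
    (hβ : β ^ Module.finrank ℤ S = N) (hodd : Odd (Module.finrank ℤ S))
    (hdvd : Module.finrank ℤ S ∣ N - 1) :
    Module.finrank ℤ S ∣ Monoid.exponent (ClassGroup S) := by
  have : Fact N.Prime := ⟨hN⟩
  set n := Module.finrank ℤ S
  obtain ⟨u, hu⟩ := IsCyclic.exists_ofOrder_eq_natCard (α := (ZMod N)ˣ)
  rw [Nat.card_eq_fintype_card, ZMod.card_units] at hu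
  have hNn : N.Coprime n :=
    .of_dvd_right hdvd ((Nat.coprime_self_sub_right hN.one_le).mpr (Nat.coprime_one_right N))
  obtain ⟨q, hq, hqu, hqn, hqn'⟩ := exists_prime_natCast_eq_and_coprime hNn hodd u.isUnit
  have hqN : ¬ q ∣ N := by
    rw [Nat.prime_dvd_prime_iff_eq hq hN]
    rintro rfl
    exact u.ne_zero (by rw [← hqu, ZMod.natCast_self])
  obtain ⟨P, hP⟩ := exists_ideal_absNorm_eq_of_pow_finrank_eq_prime hN hβ hq hqN
    (hq.coprime_iff_not_dvd.mp hqn.symm) hqn'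
  have hP0 : P ∈ nonZeroDivisors (Ideal S) :=
    Ideal.absNorm_ne_zero_iff_mem_nonZeroDivisors.mp (hP ▸ hq.ne_zero)
  have hrad : Ideal.span {β} ≤ (Ideal.span {(N : S)}).radical :=
    (Ideal.span_singleton_le_iff_mem _).mpr ⟨n, hβ ▸ Ideal.mem_span_singleton_self _⟩
  exact (finrank_dvd_orderOf_mk0 hN (absNorm_span_singleton_of_pow_finrank_eq hβ) hrad hodd hdvd
    ⟨P, hP0⟩ hu (by rw [hP, hqu])).trans (Monoid.order_dvd_exponent _)

end TotallyRamified

open NumberField in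
theorem statement8_general (p N : ℕ) (hpodd : Odd p) (hN : N.Prime) (hNmod : N % p = 1)
    (K : Type*) [Field K] [NumberField K]
    (α : K) (hα : α ^ p = (N : K)) (hKdeg : Module.finrank ℚ K = p) :
    1 ≤ classRank p K ∧
      p ∣ Nat.card (ClassGroup (𝓞 K)) := by
  have hrank : Module.finrank ℤ (𝓞 K) = p := (RingOfIntegers.rank K).trans hKdeg
  have hint : IsIntegral ℤ α := .of_pow hpodd.pos (hα ▸ isIntegral_natCast N)
  obtain ⟨β, hβα⟩ : ∃ β : 𝓞 K, (β : K) = α := ⟨⟨α, hint⟩, rfl⟩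
  have hβ : β ^ Module.finrank ℤ (𝓞 K) = N :=
    RingOfIntegers.ext (by simp [hrank, hβα, hα])
  have hdvd : p ∣ N - 1 := by
    rw [← hNmod]
    exact Nat.dvd_sub_mod N
  have hexp : p ∣ Monoid.exponent (ClassGroup (𝓞 K)) := by
    have := finrank_dvd_exponent_classGroup hN hβ (hrank ▸ hpodd) (hrank ▸ hdvd)
    rwa [hrank] at this
  have hp1 : p ≠ 1 := by
    rintro rfl
    simp [Nat.mod_one] at hNmod
  exact ⟨one_le_pRank_of_dvd_exponent hp1 hexp, hexp.trans Group.exponent_dvd_nat_card⟩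

/-- For any odd prime `p` and prime `N ≡ 1 (mod p)`, one has `r_K ≥ 1`; equivalently,
`p` divides the class number of `K = ℚ(N^{1/p})`. -/
theorem statement8 (p N : ℕ) (hp : p.Prime) (hpodd : Odd p)
    (hN : N.Prime) (hNmod : N % p = 1)
    (K : Type*) [Field K] [NumberField K]
    (α : K) (hα : α ^ p = (N : K)) (hKdeg : Module.finrank ℚ K = p) :
    1 ≤ classRank p K ∧
      p ∣ Nat.card (ClassGroup (NumberField.RingOfIntegers K)) :=
  statement8_general p N hpodd hN hNmod K α hα hKdeg
end
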